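/- (Propagation of chaos for M3FC, with rate for finite state spaces.) Let 𝒳, 𝒰, 𝒳⁰, 𝒰⁰ be compact metric spaces, with p, p⁰, r Lipschitz, and equi-Lipschitz policy classes Π, Π⁰ with constant L_Π. Consider the N-agent M3FC system: x_0^{i,N} i.i.d. ∼ μ_0, u_t^{i,N} ∼ π_t(·|x_t^{i,N}, x_t^{0,N}, μ_t^N), u_t^{0,N} ∼ π⁰_t(·|x_t^{0,N}, μ_t^N), x_{t+1}^{i,N} ∼ p(·|x_t^{i,N}, u_t^{i,N}, x_t^{0,N}, u_t^{0,N}, μ_t^N), x_{t+1}^{0,N} ∼ p⁰(·|x_t^{0,N}, u_t^{0,N}, μ_t^N), with μ_t^N := (1/N) Σ_i δ_{x_t^{i,N}}; and the limiting M3FC process (x⁰_t, u⁰_t, μ_t) with μ_{t+1} = T(x⁰_t, u⁰_t, μ_t, μ_t ⊗ π_t(x⁰_t, μ_t)), u⁰_t ∼ π⁰_t(·|x⁰_t, μ_t), x⁰_{t+1} ∼ p⁰(·|x⁰_t, u⁰_t, μ_t). Then for any equi-Lipschitz family ℱ ⊆ ℝ^{𝒳⁰ × 𝒰⁰ × 𝒫(𝒳)}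 with shared constant L_ℱ and every t ∈ ℕ: sup_{f ∈ ℱ, π ∈ Π, π⁰ ∈ Π⁰} | E[ f(x_t^{0,N}, u_t^{0,N}, μ_t^N) − f(x⁰_t, u⁰_t, μ_t) ] | → 0 as N → ∞. Moreover, if 𝒳 is finite, the convergence rate is O(1/√N). -/

import Mathlib

open MeasureTheory

noncomputable instance {X : Type*} [MeasurableSpace X] : MeasurableSpace (ProbabilityMeasure X) :=
  inferInstanceAs (MeasurableSpace {μ : Measure X // IsProbabilityMeasure μ})

/-- `W₁` distance on probability measures, via Kantorovich duality. -/
noncomputable def W1 {X : Type*} [MeasurableSpace X] [PseudoMetricSpace X]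
    (μ ν : ProbabilityMeasure X) : ℝ :=
  ⨆ f : {f : X → ℝ // LipschitzWith 1 f},
    |∫ x, (f : X → ℝ) x ∂(μ : Measure X) - ∫ x, (f : X → ℝ) x ∂(ν : Measure X)|

/-- Empirical measure of `N` points (an arbitrary probability measure if `N = 0`). -/
noncomputable def emp {X : Type*} [MeasurableSpace X] [Nonempty X] (N : ℕ) (x : Fin N → X) :
    ProbabilityMeasure X := by
  classical
  exact if hN : N = 0 then ⟨Measure.dirac (Classical.arbitrary X), inferInstance⟩
  else ⟨(N : ENNReal)⁻¹ • ∑ i : Fin N, Measure.dirac (x i), by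
    constructor
    simp only [Measure.smul_apply, Measure.coe_finset_sum, Finset.sum_apply,
      Measure.dirac_apply' _ MeasurableSet.univ, smul_eq_mul]
    simp only [Set.indicator_univ, Pi.one_apply, Finset.sum_const, Finset.card_univ,
      Fintype.card_fin, nsmul_eq_mul, mul_one]
    exact ENNReal.inv_mul_cancel (by exact_mod_cast hN) (by simp)⟩

/-- Law of `(x⁰_t, u⁰_t, (x^{i,N}_t)_i)` in the `N`-agent M3FC system: minor agents start
i.i.d. `μ0`, the major agent starts at `x00`; minor actions are sampled from the shared policy
`π`, the major action from `π0`, and states transition through `p` and `p⁰`, all driven by the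
empirical mean field. -/
noncomputable def m3LawN {X U X0 U0 : Type*} [MeasurableSpace X] [Nonempty X]
    [MeasurableSpace U] [MeasurableSpace X0] [MeasurableSpace U0]
    (p : X → U → X0 → U0 → ProbabilityMeasure X → ProbabilityMeasure X)
    (p0 : X0 → U0 → ProbabilityMeasure X → ProbabilityMeasure X0)
    (π : ℕ → X → X0 → ProbabilityMeasure X → ProbabilityMeasure U)
    (π0 : ℕ → X0 → ProbabilityMeasure X → ProbabilityMeasure U0)
    (μ0 : ProbabilityMeasure X) (x00 : X0) (N : ℕ) :
    ℕ → Measure (X0 × U0 × (Fin N → X))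
  | 0 => (Measure.pi fun _ : Fin N => (μ0 : Measure X)).bind fun x =>
      ((π0 0 x00 (emp N x) : Measure U0)).map fun u0 => (x00, u0, x)
  | t + 1 => (m3LawN p p0 π π0 μ0 x00 N t).bind fun s =>
      (((p0 s.1 s.2.1 (emp N s.2.2) : Measure X0)).prod
        (Measure.pi fun i => ((π t (s.2.2 i) s.1 (emp N s.2.2) : Measure U)).bind
          fun u => (p (s.2.2 i) u s.1 s.2.1 (emp N s.2.2) : Measure X))).bind
        fun y => ((π0 (t + 1) y.1 (emp N y.2) : Measure U0)).map fun u0 => (y.1, u0, y.2)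

/-- Law of `(x⁰_t, u⁰_t, μ_t)` in the limiting M3FC process, where `Tq t x⁰ u⁰ μ` is the
(closed-loop) deterministic mean field transition. -/
noncomputable def m3LimLaw {X U0 X0 : Type*} [MeasurableSpace X]
    [MeasurableSpace X0] [MeasurableSpace U0]
    (p0 : X0 → U0 → ProbabilityMeasure X → ProbabilityMeasure X0)
    (π0 : ℕ → X0 → ProbabilityMeasure X → ProbabilityMeasure U0)
    (Tq : ℕ → X0 → U0 → ProbabilityMeasure X → ProbabilityMeasure X)
    (μ0 : ProbabilityMeasure X) (x00 : X0) :
    ℕ → Measure (X0 × U0 × ProbabilityMeasure X)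
  | 0 => ((π0 0 x00 μ0 : Measure U0)).map fun u0 => (x00, u0, μ0)
  | t + 1 => (m3LimLaw p0 π0 Tq μ0 x00 t).bind fun s =>
      ((p0 s.1 s.2.1 s.2.2 : Measure X0)).bind fun y0 =>
        ((π0 (t + 1) y0 (Tq t s.1 s.2.1 s.2.2) : Measure U0)).map
          fun u0 => (y0, u0, Tq t s.1 s.2.1 s.2.2)

section helpers
open ProbabilityTheory Filter Topology

lemma aux_integral_bind {α β : Type*} [MeasurableSpace α] [MeasurableSpace β]
    (μ : Measure α) [IsProbabilityMeasure μ] (κ : α → Measure β) (hκ : Measurable κ)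
    [∀ a, IsProbabilityMeasure (κ a)] (f : β → ℝ) (hf : Measurable f) (C : ℝ)
    (hC : ∀ b, |f b| ≤ C) :
    ∫ b, f b ∂(μ.bind κ) = ∫ a, ∫ b, f b ∂(κ a) ∂μ := by
  have h := Kernel.integral_comp (η := (⟨κ, hκ⟩ : Kernel α β)) (κ := Kernel.const Unit μ) (a := ())
    (f := f) ?_
  · simpa [Kernel.comp_apply] using h
  · rw [Kernel.comp_apply, Kernel.const_apply]
    have : IsProbabilityMeasure (μ.bind (⟨κ, hκ⟩ : Kernel α β)) := by
      refine isProbabilityMeasure_bind hκ.aemeasurable ?_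
      exact ae_of_all _ (fun a => inferInstanceAs (IsProbabilityMeasure (κ a)))
    exact Integrable.of_bound hf.aestronglyMeasurable C (ae_of_all _ hC)

lemma aux_bind_prob {α β : Type*} [MeasurableSpace α] [MeasurableSpace β]
    (μ : Measure α) [IsProbabilityMeasure μ] (κ : α → Measure β) (hκ : Measurable κ)
    [∀ a, IsProbabilityMeasure (κ a)] : IsProbabilityMeasure (μ.bind κ) := by
  refine isProbabilityMeasure_bind hκ.aemeasurable ?_
  exact ae_of_all _ (fun a => inferInstance)

lemma aux_map_meas {α β γ : Type*} [MeasurableSpace α] [MeasurableSpace β] [MeasurableSpace γ]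
    (κ : α → Measure β) (hκ : Measurable κ) [∀ a, IsProbabilityMeasure (κ a)]
    (g : α → β → γ) (hg : Measurable fun z : α × β => g z.1 z.2) :
    Measurable fun a => (κ a).map (g a) := by
  refine Measure.measurable_of_measurable_coe _ fun s hs => ?_
  have h1 : ∀ a, (κ a).map (g a) s = κ a (Prod.mk a ⁻¹' ((fun z : α × β => g z.1 z.2) ⁻¹' s)) := by
    intro a
    rw [Measure.map_apply (show Measurable (g a) from hg.comp measurable_prodMk_left) hs]
    rfl
  simp_rw [h1]
  have : IsMarkovKernel (⟨κ, hκ⟩ : Kernel α β) := ⟨fun a => inferInstanceAs (IsProbabilityMeasure (κ a))⟩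
  exact Kernel.measurable_kernel_prodMk_left (κ := (⟨κ, hκ⟩ : Kernel α β)) (hg hs)

lemma aux_bind_meas {α β γ : Type*} [MeasurableSpace α] [MeasurableSpace β] [MeasurableSpace γ]
    (κ : α → Measure β) (hκ : Measurable κ) [∀ a, IsProbabilityMeasure (κ a)]
    (η : α → β → Measure γ) (hη : Measurable fun z : α × β => η z.1 z.2) :
    Measurable fun a => (κ a).bind (η a) := by
  refine Measure.measurable_of_measurable_coe _ fun s hs => ?_
  have h1 : ∀ a, (κ a).bind (η a) s = ∫⁻ b, η a b s ∂(κ a) := by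
    intro a
    rw [Measure.bind_apply hs]
    exact (hη.comp measurable_prodMk_left).aemeasurable
  simp_rw [h1]
  have : IsMarkovKernel (⟨κ, hκ⟩ : Kernel α β) := ⟨fun a => inferInstanceAs (IsProbabilityMeasure (κ a))⟩
  exact Measurable.lintegral_kernel_prod_right (κ := (⟨κ, hκ⟩ : Kernel α β))
    (f := fun a b => η a b s) ((Measure.measurable_coe hs).comp hη)

lemma aux_prod_meas {α β γ : Type*} [MeasurableSpace α] [MeasurableSpace β] [MeasurableSpace γ]
    (κ : α → Measure β) (hκ : Measurable κ) [∀ a, IsProbabilityMeasure (κ a)]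
    (η : α → Measure γ) (hη : Measurable η) [∀ a, IsProbabilityMeasure (η a)] :
    Measurable fun a => (κ a).prod (η a) := by
  refine Measurable.measure_of_isPiSystem_of_isProbabilityMeasure generateFrom_prod.symm
    isPiSystem_prod ?_
  rintro _ ⟨u, hu, v, hv, rfl⟩
  simp_rw [Measure.prod_prod]
  exact ((Measure.measurable_coe hu).comp hκ).mul ((Measure.measurable_coe hv).comp hη)

lemma aux_pi_meas {α β : Type*} {n : ℕ} [MeasurableSpace α] [MeasurableSpace β]
    (κ : α → Fin n → Measure β) (hκ : ∀ i, Measurable fun a => κ a i)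
    [∀ a i, IsProbabilityMeasure (κ a i)] :
    Measurable fun a => Measure.pi (κ a) := by
  refine Measurable.measure_of_isPiSystem_of_isProbabilityMeasure generateFrom_pi.symm
    isPiSystem_pi ?_
  rintro _ ⟨u, hu, rfl⟩
  simp_rw [Measure.pi_pi]
  exact Finset.measurable_prod _ fun i _ => (Measure.measurable_coe (hu i (Set.mem_univ i))).comp (hκ i)

lemma aux_kernel_meas {α Y : Type*} [MeasurableSpace α] [MetricSpace Y] [MeasurableSpace Y]
    [BorelSpace Y] (κ : α → ProbabilityMeasure Y)
    (h : ∀ f : Y → ℝ, LipschitzWith 1 f → Measurable fun a => ∫ y, f y ∂(κ a : Measure Y)) :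
    Measurable fun a => (κ a : Measure Y) := by
  refine Measurable.measure_of_isPiSystem_of_isProbabilityMeasure
    ((BorelSpace.measurable_eq (α := Y)).trans borel_eq_generateFrom_isClosed)
    isPiSystem_isClosed ?_
  intro s hs
  let δ : ℕ → ℝ := fun n => 1 / ((n : ℝ) + 1)
  have hδ : ∀ n, 0 < δ n := fun n => Nat.one_div_pos_of_nat
  have hlim : Tendsto δ atTop (𝓝 0) := tendsto_one_div_add_atTop_nhds_zero_nat
  have hreal : Measurable fun a => (κ a : Measure Y).real s := by
    refine measurable_of_tendsto_metrizable (f := fun n a =>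
      ∫ y, (thickenedIndicator (hδ n) s y : ℝ) ∂(κ a : Measure Y)) ?_ ?_
    · intro n
      have hl := lipschitzWith_thickenedIndicator (hδ n) s
      have h1 : LipschitzWith 1 (fun y => δ n * (thickenedIndicator (hδ n) s y : ℝ)) := by
        refine LipschitzWith.of_dist_le_mul fun x y => ?_
        have h2 := hl.dist_le_mul x y
        rw [Real.dist_eq, ← mul_sub, abs_mul, abs_of_pos (hδ n)]
        rw [NNReal.dist_eq] at h2
        have h3 : (((δ n).toNNReal⁻¹ : NNReal) : ℝ) = (δ n)⁻¹ := by
          rw [NNReal.coe_inv, Real.coe_toNNReal _ (hδ n).le]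
        rw [h3] at h2
        calc _ ≤ δ n * ((δ n)⁻¹ * dist x y) := by gcongr
          _ = _ := by rw [← mul_assoc, mul_inv_cancel₀ (hδ n).ne']; simp
      have h2 := (h _ h1).const_mul ((δ n)⁻¹)
      convert h2 using 2 with a
      rw [integral_const_mul, ← mul_assoc, inv_mul_cancel₀ (hδ n).ne', one_mul]
    · rw [tendsto_pi_nhds]
      intro a
      exact tendsto_integral_thickenedIndicator_of_isClosed (κ a : Measure Y) hs hδ hlim
  have : (fun a => (κ a : Measure Y) s) = fun a => ENNReal.ofReal ((κ a : Measure Y).real s) := by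
    funext a
    simp [Measure.real]
  rw [this]
  exact hreal.ennreal_ofReal

set_option linter.unusedSectionVars false
section w1
variable {X : Type*} [MetricSpace X] [CompactSpace X] [MeasurableSpace X] [BorelSpace X]

lemma aux_cont_int (μ : Measure X) [IsProbabilityMeasure μ] {f : X → ℝ} (hf : Continuous f) :
    Integrable f μ := by
  obtain ⟨C, hC⟩ := isCompact_univ.exists_bound_of_continuousOn hf.continuousOn
  exact Integrable.of_bound hf.measurable.aestronglyMeasurable C
    (ae_of_all _ fun x => hC x (Set.mem_univ x))

/-- diameter of the whole space -/
noncomputable def dm (X : Type*) [MetricSpace X] : ℝ := Metric.diam (Set.univ : Set X)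

lemma aux_dist_le (x y : X) : dist x y ≤ dm X :=
  Metric.dist_le_diam_of_mem (Metric.isBounded_of_compactSpace) (Set.mem_univ x) (Set.mem_univ y)

lemma dm_nonneg (X : Type*) [MetricSpace X] : 0 ≤ dm X := Metric.diam_nonneg

lemma aux_lip {f : X → ℝ} (hf : LipschitzWith 1 f) (x y : X) : |f x - f y| ≤ dist x y := by
  have := hf.dist_le_mul x y
  simpa [Real.dist_eq] using this

/-- integral difference bound from a sup bound -/
lemma aux_int_sub {Z : Type*} [MeasurableSpace Z] (μ : Measure Z) [IsProbabilityMeasure μ]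
    {f g : Z → ℝ} (hf : Integrable f μ) (hg : Integrable g μ) {A : ℝ}
    (h : ∀ x, |f x - g x| ≤ A) : |∫ x, f x ∂μ - ∫ x, g x ∂μ| ≤ A := by
  rw [← integral_sub hf hg]
  have := norm_integral_le_of_norm_le_const (μ := μ) (f := fun x => f x - g x) (C := A)
    (ae_of_all _ h)
  simpa using this

lemma aux_int_diff (μ ν : ProbabilityMeasure X) {f : X → ℝ} (hf : LipschitzWith 1 f) :
    |∫ x, f x ∂(μ : Measure X) - ∫ x, f x ∂(ν : Measure X)| ≤ 2 * dm X := by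
  have hne : Nonempty X := μ.nonempty
  let a : X := Classical.arbitrary X
  have h : ∀ κ : ProbabilityMeasure X, |∫ x, f x ∂(κ : Measure X) - f a| ≤ dm X := by
    intro κ
    have := aux_int_sub (κ : Measure X) (aux_cont_int _ hf.continuous) (integrable_const (f a))
      (A := dm X) (fun x => (aux_lip hf x a).trans (aux_dist_le x a))
    simpa using this
  have h1 := abs_le.1 (h μ)
  have h2 := abs_le.1 (h ν)
  rw [abs_le]
  constructor <;> linarith

lemma le_W1 (μ ν : ProbabilityMeasure X) {f : X → ℝ} (hf : LipschitzWith 1 f) :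
    |∫ x, f x ∂(μ : Measure X) - ∫ x, f x ∂(ν : Measure X)| ≤ W1 μ ν := by
  have hb : BddAbove (Set.range fun f : {f : X → ℝ // LipschitzWith 1 f} =>
      |∫ x, (f : X → ℝ) x ∂(μ : Measure X) - ∫ x, (f : X → ℝ) x ∂(ν : Measure X)|) := by
    refine ⟨2 * dm X, ?_⟩
    rintro _ ⟨g, rfl⟩
    exact aux_int_diff μ ν g.2
  exact le_ciSup hb (⟨f, hf⟩ : {f : X → ℝ // LipschitzWith 1 f})

lemma W1_nonneg (μ ν : ProbabilityMeasure X) : 0 ≤ W1 μ ν :=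
  Real.iSup_nonneg fun _ => abs_nonneg _

lemma W1_le (μ ν : ProbabilityMeasure X) {B : ℝ} (hB : 0 ≤ B)
    (h : ∀ f : X → ℝ, LipschitzWith 1 f →
      |∫ x, f x ∂(μ : Measure X) - ∫ x, f x ∂(ν : Measure X)| ≤ B) : W1 μ ν ≤ B :=
  Real.iSup_le (fun f => h f f.2) hB

lemma W1_le_dm (μ ν : ProbabilityMeasure X) : W1 μ ν ≤ 2 * dm X :=
  W1_le μ ν (by have := dm_nonneg X; positivity) fun _ hf => aux_int_diff μ ν hf

lemma aux_net [Nonempty X] {ε : ℝ} (hε : 0 < ε) : ∃ s : Finset (X → ℝ),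
    (∀ g ∈ s, LipschitzWith 1 g) ∧
    ∀ f : X → ℝ, LipschitzWith 1 f → ∃ g ∈ s, ∃ c : ℝ, ∀ x, |f x - c - g x| ≤ ε := by
  classical
  let a : X := Classical.arbitrary X
  let A : Set (BoundedContinuousFunction X ℝ) := {f | LipschitzWith 1 f ∧ f a = 0}
  have hA : IsCompact (closure A) := by
    refine BoundedContinuousFunction.arzela_ascoli (Set.Icc (-(dm X)) (dm X)) isCompact_Icc A ?_ ?_
    · rintro f x ⟨hf, h0⟩
      have := (aux_lip hf x a).trans (aux_dist_le x a)
      rw [h0, sub_zero] at this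
      exact abs_le.1 this
    · exact (LipschitzWith.uniformEquicontinuous _ 1 fun f : A => f.2.1).equicontinuous
  have htb : TotallyBounded A := hA.totallyBounded.subset subset_closure
  obtain ⟨t, htA, htf, hcov⟩ := Metric.finite_approx_of_totallyBounded htb ε hε
  refine ⟨htf.toFinset.image (fun f : BoundedContinuousFunction X ℝ => (f : X → ℝ)), ?_, ?_⟩
  · intro g hg
    simp only [Finset.mem_image, Set.Finite.mem_toFinset] at hg
    obtain ⟨f, hf, rfl⟩ := hg
    exact (htA hf).1
  · intro f hf
    let F : BoundedContinuousFunction X ℝ :=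
      BoundedContinuousFunction.mkOfCompact ⟨fun x => f x - f a, hf.continuous.sub continuous_const⟩
    have hF : F ∈ A := by
      refine ⟨?_, by simp [F]⟩
      refine LipschitzWith.of_dist_le_mul fun x y => ?_
      have := aux_lip hf x y
      simpa [F, Real.dist_eq] using this
    have := hcov hF
    simp only [Set.mem_iUnion, Metric.mem_ball, exists_prop] at this
    obtain ⟨G, hG, hd⟩ := this
    refine ⟨G, Finset.mem_image.2 ⟨G, by simpa using hG, rfl⟩, f a, fun x => ?_⟩
    have := (BoundedContinuousFunction.dist_coe_le_dist (f := F) (g := G) x).trans hd.le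
    simpa [F, Real.dist_eq, sub_sub, add_comm] using this

/-- finite family approximation of W1 -/
lemma aux_net_W1 [Nonempty X] {ε : ℝ} (hε : 0 < ε) : ∃ s : Finset (X → ℝ),
    (∀ g ∈ s, LipschitzWith 1 g) ∧
    ∀ μ ν : ProbabilityMeasure X, ∀ B : ℝ, 0 ≤ B → (∀ g ∈ s,
      |∫ x, g x ∂(μ : Measure X) - ∫ x, g x ∂(ν : Measure X)| ≤ B) → W1 μ ν ≤ 2 * ε + B := by
  obtain ⟨s, hs, hnet⟩ := aux_net (X := X) hε
  refine ⟨s, hs, fun μ ν B hB h => W1_le _ _ (by positivity) fun f hf => ?_⟩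
  obtain ⟨g, hg, c, hc⟩ := hnet f hf
  have key : ∀ κ : ProbabilityMeasure X,
      |∫ x, f x ∂(κ : Measure X) - (c + ∫ x, g x ∂(κ : Measure X))| ≤ ε := by
    intro κ
    have hgi := aux_cont_int (κ : Measure X) (hs g hg).continuous
    have := aux_int_sub (κ : Measure X) (aux_cont_int _ hf.continuous)
      ((integrable_const c).add hgi) (A := ε) (fun x => by
        have := hc x
        simpa [sub_sub] using this)
    rw [integral_add' (integrable_const c) hgi] at this
    simpa using this
  have h1 := abs_le.1 (key μ)
  have h2 := abs_le.1 (key ν)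
  have h3 := abs_le.1 (h g hg)
  rw [abs_le]
  constructor <;> linarith

lemma aux_meas_int {f : X → ℝ} (hf : Continuous f) :
    Measurable fun μ : ProbabilityMeasure X => ∫ x, f x ∂(μ : Measure X) := by
  let κ : Kernel (ProbabilityMeasure X) X := ⟨fun μ => (μ : Measure X), measurable_subtype_coe⟩
  have : IsMarkovKernel κ := ⟨fun μ => inferInstanceAs (IsProbabilityMeasure (μ : Measure X))⟩
  exact (hf.measurable.stronglyMeasurable.integral_kernel (κ := κ)).measurable

lemma aux_meas_W1 [Nonempty X] (ν : ProbabilityMeasure X) :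
    Measurable fun μ : ProbabilityMeasure X => W1 μ ν := by
  have hpos : ∀ n : ℕ, (0 : ℝ) < 1 / ((n : ℝ) + 1) := fun n => Nat.one_div_pos_of_nat
  choose s hs hW using fun n : ℕ => aux_net_W1 (X := X) (hpos n)
  let W : ℕ → ProbabilityMeasure X → ℝ := fun n μ => ⨆ g : s n,
    |∫ x, (g : X → ℝ) x ∂(μ : Measure X) - ∫ x, (g : X → ℝ) x ∂(ν : Measure X)|
  have hlim : Tendsto (fun n : ℕ => 2 * (1 / ((n : ℝ) + 1))) atTop (𝓝 0) := by
    simpa using (tendsto_one_div_add_atTop_nhds_zero_nat (𝕜 := ℝ)).const_mul 2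
  refine measurable_of_tendsto_metrizable (f := W) ?_ ?_
  · intro n
    refine Measurable.iSup fun g => ?_
    have := (aux_meas_int (hs n g g.2).continuous).sub_const (∫ x, (g : X → ℝ) x ∂(ν : Measure X))
    exact measurable_norm.comp this
  · rw [tendsto_pi_nhds]
    intro μ
    have h1 : ∀ n, W n μ ≤ W1 μ ν := fun n =>
      Real.iSup_le (fun g => le_W1 μ ν (hs n g g.2)) (W1_nonneg μ ν)
    have h2 : ∀ n : ℕ, W1 μ ν - 2 * (1 / ((n : ℝ) + 1)) ≤ W n μ := by
      intro n
      have := hW n μ ν (W n μ) (Real.iSup_nonneg fun _ => abs_nonneg _) (fun g hg =>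
        le_ciSup (f := fun g : s n => |∫ x, (g : X → ℝ) x ∂(μ : Measure X)
          - ∫ x, (g : X → ℝ) x ∂(ν : Measure X)|) (Set.finite_range _).bddAbove ⟨g, hg⟩)
      linarith
    refine tendsto_of_tendsto_of_tendsto_of_le_of_le ?_ tendsto_const_nhds h2 h1
    simpa using tendsto_const_nhds.sub hlim

lemma aux_dense [Nonempty X] {ε : ℝ} (hε : 0 < ε) : ∃ D : Set (ProbabilityMeasure X),
    D.Countable ∧ ∀ μ, ∃ ν ∈ D, W1 μ ν ≤ ε := by
  obtain ⟨s, hs, hW⟩ := aux_net_W1 (X := X) (ε := ε / 4) (by positivity)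
  let Φ : ProbabilityMeasure X → (s → ℝ) := fun μ g => ∫ x, (g : X → ℝ) x ∂(μ : Measure X)
  obtain ⟨t, htr, htc, hd⟩ :=
    (TopologicalSpace.IsSeparable.of_separableSpace (Set.range Φ)).exists_countable_dense_subset
  choose ψ hψ using fun y : t => htr y.2
  have := htc.to_subtype
  refine ⟨Set.range ψ, Set.countable_range ψ, fun μ => ?_⟩
  obtain ⟨y, hy, hdist⟩ := Metric.mem_closure_iff.1 (hd ⟨μ, rfl⟩) (ε / 2) (by positivity)
  refine ⟨ψ ⟨y, hy⟩, ⟨_, rfl⟩, ?_⟩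
  have := hW μ (ψ ⟨y, hy⟩) (ε / 2) (by positivity) (fun g hg => by
    have h1 := (dist_le_pi_dist (Φ μ) y ⟨g, hg⟩).trans hdist.le
    have h2 : Φ (ψ ⟨y, hy⟩) = y := hψ ⟨y, hy⟩
    rw [← h2] at h1
    simpa [Φ, Real.dist_eq] using h1)
  linarith

/-- Lipschitz functions are measurable -/
lemma aux_lip_meas [Nonempty X] {A : Type*} [MetricSpace A] [CompactSpace A] [MeasurableSpace A]
    [BorelSpace A] (φ : A × ProbabilityMeasure X → ℝ) (L : ℝ) (hL : 0 ≤ L)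
    (h : ∀ a a' μ μ', |φ (a, μ) - φ (a', μ')| ≤ L * (dist a a' + W1 μ μ')) : Measurable φ := by
  rcases isEmpty_or_nonempty A with hA | hA
  · exact measurable_of_empty _
  obtain ⟨DA, hDAc, hDA⟩ := TopologicalSpace.exists_countable_dense A
  have hpos : ∀ n : ℕ, (0 : ℝ) < 1 / ((n : ℝ) + 1) := fun n => Nat.one_div_pos_of_nat
  choose D hDc hD using fun n : ℕ => aux_dense (X := X) (hpos n)
  let E : Set (A × ProbabilityMeasure X) := DA ×ˢ (⋃ n, D n)
  have hE : E.Countable := hDAc.prod (Set.countable_iUnion hDc)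
  have := hE.to_subtype
  have hEd : ∀ z : A × ProbabilityMeasure X, ∀ ε > 0, ∃ e ∈ E, dist z.1 e.1 + W1 z.2 e.2 < ε := by
    intro z ε hε
    obtain ⟨a, ha, hda⟩ := Metric.mem_closure_iff.1 (hDA z.1) (ε / 2) (by positivity)
    obtain ⟨n, hn⟩ := exists_nat_one_div_lt (show (0 : ℝ) < ε / 2 by positivity)
    obtain ⟨ν, hν, hw⟩ := hD n z.2
    exact ⟨(a, ν), ⟨ha, Set.mem_iUnion.2 ⟨n, hν⟩⟩, by simp only; linarith⟩
  have hne : Nonempty E := by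
    have hPne : Nonempty (ProbabilityMeasure X) := ⟨⟨Measure.dirac (Classical.arbitrary X), inferInstance⟩⟩
    obtain ⟨e, he, -⟩ := hEd (Classical.arbitrary _) 1 one_pos
    exact ⟨⟨e, he⟩⟩
  have key : φ = fun z => ⨅ e : E, (φ e.1 + L * (dist z.1 e.1.1 + W1 z.2 e.1.2)) := by
    funext z
    have hlow : ∀ e : E, φ z ≤ φ e.1 + L * (dist z.1 e.1.1 + W1 z.2 e.1.2) := by
      intro e
      have := (abs_le.1 (h z.1 e.1.1 z.2 e.1.2)).2
      simp only [Prod.mk.eta] at this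
      linarith
    apply le_antisymm
    · exact le_ciInf hlow
    · refine le_of_forall_pos_le_add fun ε hε => ?_
      obtain ⟨e, he, hlt⟩ := hEd z (ε / (2 * (L + 1))) (by positivity)
      refine (ciInf_le ⟨φ z, by rintro _ ⟨e, rfl⟩; exact hlow e⟩ ⟨e, he⟩).trans ?_
      have h1 := (abs_le.1 (h z.1 e.1 z.2 e.2)).1
      simp only [Prod.mk.eta] at h1 ⊢
      have h2 : L * (dist z.1 e.1 + W1 z.2 e.2) ≤ (L + 1) * (ε / (2 * (L + 1))) := by
        have := W1_nonneg z.2 e.2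
        have := dist_nonneg (x := z.1) (y := e.1)
        gcongr <;> linarith
      have h3 : (L + 1) * (ε / (2 * (L + 1))) = ε / 2 := by field_simp
      linarith
  rw [key]
  refine Measurable.iInf fun e => ?_
  refine (Measurable.const_mul (Measurable.add ?_ ?_) L).const_add _
  · exact measurable_fst.dist measurable_const
  · exact (aux_meas_W1 e.1.2).comp measurable_snd

end w1
section lln
variable {X : Type*} [MetricSpace X] [CompactSpace X] [MeasurableSpace X] [BorelSpace X]

lemma emp_coe [Nonempty X] {N : ℕ} (hN : N ≠ 0) (x : Fin N → X) :
    ((emp N x : ProbabilityMeasure X) : Measure X)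
      = (N : ENNReal)⁻¹ • ∑ i : Fin N, Measure.dirac (x i) := by
  simp [emp, hN]

lemma emp_meas [Nonempty X] (N : ℕ) :
    Measurable fun x : Fin N → X => (emp N x : ProbabilityMeasure X) := by
  rcases eq_or_ne N 0 with rfl | hN
  · have : Subsingleton (Fin 0 → X) := inferInstance
    exact Subsingleton.measurable
  refine Measurable.subtype_mk (f := fun x => ((emp N x : ProbabilityMeasure X) : Measure X)) ?_
  refine Measure.measurable_of_measurable_coe _ fun s hs => ?_
  simp_rw [emp_coe hN]
  simp only [Measure.smul_apply, Measure.coe_finsetSum, Finset.sum_apply, smul_eq_mul]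
  refine Measurable.const_mul ?_ _
  refine Finset.measurable_sum _ fun i _ => ?_
  exact ((Measure.measurable_coe hs).comp Measure.measurable_dirac).comp (measurable_pi_apply i)

lemma emp_int [Nonempty X] {N : ℕ} (hN : N ≠ 0) (x : Fin N → X) {f : X → ℝ} (hf : Continuous f) :
    ∫ y, f y ∂((emp N x : ProbabilityMeasure X) : Measure X) = (N : ℝ)⁻¹ * ∑ i, f (x i) := by
  rw [emp_coe hN, integral_smul_measure, integral_finsetSum_measure
    (fun i _ => aux_cont_int _ hf)]
  simp

lemma aux_l1_le {Z : Type*} [MeasurableSpace Z] (μ : Measure Z) [IsProbabilityMeasure μ]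
    (f : Z → ℝ) (hf : MemLp f 2 μ) : (∫ z, |f z| ∂μ) ^ 2 ≤ ∫ z, (f z) ^ 2 ∂μ := by
  have h1 := variance_nonneg (fun z => |f z|) μ
  have h2 := variance_eq_sub (μ := μ) (X := fun z => |f z|) hf.abs
  rw [h2] at h1
  have h3 : (∫ z, ((fun z => |f z|) ^ 2) z ∂μ) = ∫ z, (f z) ^ 2 ∂μ := by
    simp
  rw [h3] at h1
  linarith

lemma aux_var {N : ℕ} (hN : N ≠ 0) (P : Fin N → Measure X) [∀ i, IsProbabilityMeasure (P i)]
    {φ : X → ℝ} (hφ : Continuous φ) {D : ℝ} (hD : 0 ≤ D) (c : ℝ) (hc : ∀ x, |φ x - c| ≤ D) :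
    ∫ y, |(N : ℝ)⁻¹ * ∑ i, φ (y i) - (N : ℝ)⁻¹ * ∑ i, ∫ x, φ x ∂(P i)| ∂(Measure.pi P)
      ≤ D / Real.sqrt N := by
  have hbd : ∀ x, ‖φ x‖ ≤ |c| + D := fun x => by
    have := abs_add_le c (φ x - c)
    have h2 := hc x
    rw [Real.norm_eq_abs]
    calc |φ x| = |c + (φ x - c)| := by ring_nf
      _ ≤ _ := by linarith
  have hmem : ∀ i, MemLp φ 2 (P i) := fun i =>
    MemLp.of_bound hφ.measurable.aestronglyMeasurable (|c| + D) (ae_of_all _ hbd)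
  have hvar := variance_sum_pi (μ := P) (X := fun _ => φ) hmem
  have hle : ∀ i, variance φ (P i) ≤ D ^ 2 := by
    intro i
    have := variance_le_sq_of_bounded (μ := P i) (a := c - D) (b := c + D) (X := φ)
      (ae_of_all _ fun x => by
        have := abs_le.1 (hc x)
        constructor <;> linarith) hφ.measurable.aemeasurable
    calc _ ≤ _ := this
      _ = D ^ 2 := by ring
  let Y : (Fin N → X) → ℝ := ∑ i, fun ω => φ (ω i)
  have hYm : MemLp Y 2 (Measure.pi P) := by
    refine memLp_finsetSum' _ fun i _ => ?_
    exact (hmem i).comp_measurePreserving (measurePreserving_eval P i)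
  have hEY : ∫ y, Y y ∂(Measure.pi P) = ∑ i, ∫ x, φ x ∂(P i) := by
    simp only [Y, Finset.sum_apply]
    rw [integral_finsetSum]
    · refine Finset.sum_congr rfl fun i _ => ?_
      exact integral_comp_eval (μ := P) (i := i) hφ.measurable.aestronglyMeasurable
    · intro i _
      exact ((measurePreserving_eval P i).integrable_comp_of_integrable (aux_cont_int _ hφ))
  have hV : ∫ y, (Y y - ∑ i, ∫ x, φ x ∂(P i)) ^ 2 ∂(Measure.pi P) ≤ N * D ^ 2 := by
    rw [← hEY, ← variance_eq_integral hYm.aestronglyMeasurable.aemeasurable, hvar]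
    calc _ ≤ ∑ _i : Fin N, D ^ 2 := Finset.sum_le_sum fun i _ => hle i
      _ = _ := by simp
  have h1 := aux_l1_le (Measure.pi P) (fun y => Y y - ∑ i, ∫ x, φ x ∂(P i))
    (hYm.sub (memLp_const _))
  have hNpos : (0 : ℝ) < N := by positivity
  have h2 : ∫ y, |Y y - ∑ i, ∫ x, φ x ∂(P i)| ∂(Measure.pi P) ≤ Real.sqrt N * D := by
    refine abs_le_of_sq_le_sq' ?_ (by positivity) |>.2
    rw [mul_pow, Real.sq_sqrt hNpos.le]
    exact h1.trans hV
  have h3 : ∀ y : Fin N → X, |(N : ℝ)⁻¹ * ∑ i, φ (y i) - (N : ℝ)⁻¹ * ∑ i, ∫ x, φ x ∂(P i)|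
      = (N : ℝ)⁻¹ * |Y y - ∑ i, ∫ x, φ x ∂(P i)| := by
    intro y
    rw [← mul_sub, abs_mul, abs_of_pos (inv_pos.2 hNpos)]
    simp [Y]
  simp_rw [h3]
  rw [integral_const_mul]
  calc _ ≤ (N : ℝ)⁻¹ * (Real.sqrt N * D) := by gcongr
    _ = D / Real.sqrt N := by
      have : Real.sqrt N ≠ 0 := (Real.sqrt_pos.2 hNpos).ne'
      field_simp
      rw [Real.sq_sqrt hNpos.le]

/-- uniform law of large numbers bound in `W1`. -/
def chaosBound (X : Type*) [MetricSpace X] [MeasurableSpace X] [Nonempty X]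
    (N : ℕ) (e : ℝ) : Prop :=
  ∀ (P : Fin N → Measure X), (∀ i, IsProbabilityMeasure (P i)) → ∀ ν : ProbabilityMeasure X,
    (∀ φ : X → ℝ, Continuous φ → ∫ x, φ x ∂(ν : Measure X) = (N : ℝ)⁻¹ * ∑ i, ∫ x, φ x ∂(P i)) →
    ∫ y, W1 (emp N y) ν ∂(Measure.pi P) ≤ e

lemma chaos_of_family [Nonempty X] {ι : Type*} (s : Finset ι) (φ : ι → X → ℝ)
    (hφ : ∀ i ∈ s, Continuous (φ i)) {D : ℝ} (hD : 0 ≤ D) (c : ι → ℝ)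
    (hc : ∀ i ∈ s, ∀ x, |φ i x - c i| ≤ D) {ε K : ℝ} (hK : 0 ≤ K)
    (hW : ∀ μ ν : ProbabilityMeasure X, W1 μ ν ≤ ε + K * ∑ i ∈ s,
      |∫ x, φ i x ∂(μ : Measure X) - ∫ x, φ i x ∂(ν : Measure X)|) {N : ℕ} (hN : N ≠ 0) :
    chaosBound X N (ε + K * (s.card * (D / Real.sqrt N))) := by
  intro P hP ν hν
  have hintg : ∀ i ∈ s, Integrable (fun y : Fin N → X =>
      |∫ x, φ i x ∂((emp N y : ProbabilityMeasure X) : Measure X) - ∫ x, φ i x ∂(ν : Measure X)|)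
      (Measure.pi P) := by
    intro i hi
    obtain ⟨C, hC⟩ := isCompact_univ.exists_bound_of_continuousOn (hφ i hi).continuousOn
    refine Integrable.of_bound (C := C + C) ?_ (ae_of_all _ fun y => ?_)
    · refine Measurable.aestronglyMeasurable ?_
      exact measurable_norm.comp (((aux_meas_int (hφ i hi)).comp (emp_meas N)).sub_const _)
    · rw [Real.norm_eq_abs, abs_abs]
      have hb : ∀ κ : ProbabilityMeasure X, |∫ x, φ i x ∂(κ : Measure X)| ≤ C := by
        intro κ
        have := norm_integral_le_of_norm_le_const (μ := (κ : Measure X)) (f := φ i) (C := C)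
          (ae_of_all _ fun x => hC x (Set.mem_univ x))
        simpa using this
      exact (abs_sub _ _).trans (add_le_add (hb _) (hb _))
  calc _ ≤ ∫ y : Fin N → X, (ε + K * ∑ i ∈ s,
      |∫ x, φ i x ∂((emp N y : ProbabilityMeasure X) : Measure X) - ∫ x, φ i x ∂(ν : Measure X)|)
        ∂(Measure.pi P) := by
        refine integral_mono_of_nonneg (ae_of_all _ fun y => W1_nonneg _ _) ?_
          (ae_of_all _ fun y => hW _ _)
        exact (integrable_const _).add ((integrable_finsetSum _ hintg).const_mul K)
    _ = ε + K * ∑ i ∈ s, ∫ y : Fin N → X, |∫ x, φ i x ∂((emp N y : ProbabilityMeasure X) : Measure X)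
        - ∫ x, φ i x ∂(ν : Measure X)| ∂(Measure.pi P) := by
        rw [integral_add (integrable_const _) ((integrable_finsetSum _ hintg).const_mul K),
          integral_const_mul, integral_finsetSum _ hintg]
        simp
    _ ≤ ε + K * ∑ i ∈ s, D / Real.sqrt N := by
        gcongr with i hi
        have := aux_var hN P (hφ i hi) hD (c i) (hc i hi)
        simp_rw [emp_int hN _ (hφ i hi), hν _ (hφ i hi)]
        exact this
    _ = _ := by simp

lemma chaos_general [Nonempty X] (ε : ℝ) (hε : 0 < ε) :
    ∃ N0 : ℕ, 1 ≤ N0 ∧ ∀ N ≥ N0, chaosBound X N ε := by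
  obtain ⟨s, hs, hW⟩ := aux_net_W1 (X := X) (ε := ε / 4) (by positivity)
  have a : X := Classical.arbitrary X
  have hb : ∀ N : ℕ, N ≠ 0 →
      chaosBound X N (2 * (ε / 4) + 1 * (s.card * (dm X / Real.sqrt N))) := by
    intro N hN
    refine chaos_of_family s (fun g => g) (fun g hg => (hs g hg).continuous) (dm_nonneg X)
      (fun g => g a) (fun g hg x => (aux_lip (hs g hg) x a).trans (aux_dist_le x a)) zero_le_one
      (fun μ ν => ?_) hN
    refine hW μ ν _ (by positivity) fun g hg => ?_
    rw [one_mul]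
    exact Finset.single_le_sum (f := fun g : X → ℝ => |∫ x, g x ∂(μ : Measure X)
      - ∫ x, g x ∂(ν : Measure X)|) (fun _ _ => abs_nonneg _) hg
  have hlim : Tendsto (fun N : ℕ => 2 * (ε / 4) + 1 * (s.card * (dm X / Real.sqrt N))) atTop
      (𝓝 (2 * (ε / 4) + 1 * (s.card * 0))) := by
    refine tendsto_const_nhds.add (Tendsto.const_mul _ (Tendsto.const_mul _ ?_))
    exact tendsto_const_nhds.div_atTop (Real.tendsto_sqrt_atTop.comp tendsto_natCast_atTop_atTop)
  have hev := hlim.eventually_lt_const (u := ε) (by linarith)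
  obtain ⟨N0, hN0⟩ := eventually_atTop.1 hev
  refine ⟨max N0 1, le_max_right _ _, fun N hN P hP ν hν => ?_⟩
  have h1 : N ≠ 0 := by have := le_of_max_le_right hN; omega
  exact (hb N h1 P hP ν hν).trans (hN0 N (le_of_max_le_left hN)).le

lemma chaos_finite [Nonempty X] [Finite X] :
    ∃ C : ℝ, 0 ≤ C ∧ ∀ N : ℕ, 1 ≤ N → chaosBound X N (C / Real.sqrt N) := by
  classical
  have := Fintype.ofFinite X
  have a : X := Classical.arbitrary X
  let φ : X → X → ℝ := fun x y => if y = x then 1 else 0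
  refine ⟨dm X * Fintype.card X, mul_nonneg (dm_nonneg X) (by positivity), fun N hN => ?_⟩
  have hφ : ∀ x, Continuous (φ x) := fun x => continuous_of_discreteTopology
  have h := chaos_of_family (X := X) (Finset.univ) φ (fun x _ => hφ x) (D := 1)
    zero_le_one (fun _ => 0) (fun x _ y => by by_cases h : y = x <;> simp [φ, h]) (ε := 0)
    (dm_nonneg X) (fun μ ν => ?_) (N := N) (by omega)
  · convert h using 1
    rw [Finset.card_univ]
    ring
  · rw [zero_add]
    refine W1_le _ _ (mul_nonneg (dm_nonneg X) (by positivity)) fun f hf => ?_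
    have hrep : ∀ κ : ProbabilityMeasure X, ∫ y, f y ∂(κ : Measure X)
        = f a + ∑ x, (f x - f a) * ∫ y, φ x y ∂(κ : Measure X) := by
      intro κ
      have h1 : ∀ y, f y = f a + ∑ x, (f x - f a) * φ x y := by
        intro y
        simp [φ]
      have hi : ∀ x ∈ (Finset.univ : Finset X), Integrable (fun y => (f x - f a) * φ x y)
          (κ : Measure X) := fun x _ => (aux_cont_int _ (hφ x)).const_mul _
      calc ∫ y, f y ∂(κ : Measure X) = ∫ y, (f a + ∑ x, (f x - f a) * φ x y) ∂(κ : Measure X) := by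
            simp_rw [← h1]
        _ = _ := by
          rw [integral_add (integrable_const _) (integrable_finsetSum _ hi),
            integral_finsetSum _ hi]
          simp_rw [integral_const_mul]
          simp
    rw [hrep μ, hrep ν, add_sub_add_left_eq_sub, ← Finset.sum_sub_distrib, Finset.mul_sum]
    refine (Finset.abs_sum_le_sum_abs _ _).trans (Finset.sum_le_sum fun x _ => ?_)
    rw [← mul_sub, abs_mul]
    gcongr
    exact (aux_lip hf x a).trans (aux_dist_le x a)

end lln
lemma emp_int' {X : Type*} [MetricSpace X] [MeasurableSpace X] [BorelSpace X] [CompactSpace X]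
    [Nonempty X] {N : ℕ} (hN : N ≠ 0) (x : Fin N → X) {f : X → ℝ} (hf : Measurable f)
    {C : ℝ} (hC : ∀ y, |f y| ≤ C) :
    ∫ y, f y ∂((emp N x : ProbabilityMeasure X) : Measure X) = (N : ℝ)⁻¹ * ∑ i, f (x i) := by
  rw [emp_coe hN, integral_smul_measure, integral_finsetSum_measure
    (fun i _ => Integrable.of_bound hf.aestronglyMeasurable C (ae_of_all _ hC))]
  simp

lemma aux_scale {Y : Type*} [MetricSpace Y] [CompactSpace Y] [MeasurableSpace Y] [BorelSpace Y]
    (κ κ' : ProbabilityMeasure Y) {B : ℝ}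
    (hB : ∀ g : Y → ℝ, LipschitzWith 1 g →
      |∫ y, g y ∂(κ : Measure Y) - ∫ y, g y ∂(κ' : Measure Y)| ≤ B)
    {f : Y → ℝ} {L : ℝ} (hL : 0 ≤ L) (hf : ∀ y z, |f y - f z| ≤ L * dist y z) :
    |∫ y, f y ∂(κ : Measure Y) - ∫ y, f y ∂(κ' : Measure Y)| ≤ L * B := by
  rcases hL.eq_or_lt with rfl | hLp
  · obtain ⟨a⟩ : Nonempty Y := κ.nonempty
    have h1 : ∀ y, f y = f a := fun y => by
      have := hf y a
      rw [zero_mul] at this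
      exact sub_eq_zero.1 (abs_nonpos_iff.1 this)
    simp_rw [h1]
    simp
  · have h1 : LipschitzWith 1 (fun y => L⁻¹ * f y) := by
      refine LipschitzWith.of_dist_le_mul fun y z => ?_
      rw [Real.dist_eq, ← mul_sub, abs_mul, abs_of_pos (inv_pos.2 hLp)]
      calc _ ≤ L⁻¹ * (L * dist y z) := by gcongr; exact hf y z
        _ = _ := by rw [← mul_assoc, inv_mul_cancel₀ hLp.ne']; simp
    have h2 := hB _ h1
    rw [integral_const_mul, integral_const_mul, ← mul_sub, abs_mul, abs_of_pos (inv_pos.2 hLp)] at h2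
    rwa [inv_mul_le_iff₀ hLp] at h2

lemma aux_lip_cont {Y : Type*} [MetricSpace Y] {f : Y → ℝ} {L : ℝ} (hL : 0 ≤ L)
    (hf : ∀ y z, |f y - f z| ≤ L * dist y z) : Continuous f := by
  have : LipschitzWith L.toNNReal f := LipschitzWith.of_dist_le_mul fun y z => by
    rw [Real.dist_eq, Real.coe_toNNReal _ hL]
    exact hf y z
  exact this.continuous

lemma aux_step {Y : Type*} [MetricSpace Y] [CompactSpace Y] [MeasurableSpace Y] [BorelSpace Y]
    (κ κ' : ProbabilityMeasure Y) {B : ℝ}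
    (hB : ∀ g : Y → ℝ, LipschitzWith 1 g →
      |∫ y, g y ∂(κ : Measure Y) - ∫ y, g y ∂(κ' : Measure Y)| ≤ B)
    {f f' : Y → ℝ} {L A : ℝ} (hL : 0 ≤ L) (hf : ∀ y z, |f y - f z| ≤ L * dist y z)
    (hf' : ∀ y z, |f' y - f' z| ≤ L * dist y z) (hA : ∀ y, |f y - f' y| ≤ A) :
    |∫ y, f y ∂(κ : Measure Y) - ∫ y, f' y ∂(κ' : Measure Y)| ≤ A + L * B := by
  have h1 := aux_int_sub (κ : Measure Y) (aux_cont_int _ (aux_lip_cont hL hf))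
    (aux_cont_int _ (aux_lip_cont hL hf')) hA
  have h2 := aux_scale κ κ' hB hL hf'
  exact (abs_sub_le _ _ _).trans (add_le_add h1 h2)

lemma W1_self {X : Type*} [MetricSpace X] [MeasurableSpace X] (μ : ProbabilityMeasure X) :
    W1 μ μ = 0 := by
  simp [W1]

section step
variable {X U X0 U0 : Type*}
    [MetricSpace X] [CompactSpace X] [MeasurableSpace X] [BorelSpace X] [Nonempty X]
    [MetricSpace U] [CompactSpace U] [MeasurableSpace U] [BorelSpace U]
    [MetricSpace X0] [CompactSpace X0] [MeasurableSpace X0] [BorelSpace X0]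
    [MetricSpace U0] [CompactSpace U0] [MeasurableSpace U0] [BorelSpace U0]

/-- Lipschitz on triples -/
def Lip3 (L : ℝ) (f : X0 × U0 × ProbabilityMeasure X → ℝ) : Prop :=
  ∀ a b, |f a - f b| ≤ L * (dist a.1 b.1 + dist a.2.1 b.2.1 + W1 a.2.2 b.2.2)

/-- Lipschitz on pairs -/
def Lip2 (L : ℝ) (g : X0 → ProbabilityMeasure X → ℝ) : Prop :=
  ∀ x x' μ μ', |g x μ - g x' μ'| ≤ L * (dist x x' + W1 μ μ')

lemma Lip3.meas {L : ℝ} (hL : 0 ≤ L) {f : X0 × U0 × ProbabilityMeasure X → ℝ} (hf : Lip3 L f) :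
    Measurable f := by
  have h : Measurable fun z : (X0 × U0) × ProbabilityMeasure X => f (z.1.1, z.1.2, z.2) := by
    refine aux_lip_meas _ (2 * L) (by positivity) fun a a' μ μ' => (hf _ _).trans ?_
    have h1 : dist a.1 a'.1 ≤ dist a a' := le_max_left _ _
    have h2 : dist a.2 a'.2 ≤ dist a a' := le_max_right _ _
    have h3 := W1_nonneg μ μ'
    simp only
    calc _ ≤ L * (2 * (dist a a' + W1 μ μ')) := by gcongr; linarith
      _ = _ := by ring
  exact h.comp ((measurable_fst.prodMk measurable_snd.fst).prodMk measurable_snd.snd)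

lemma Lip3.bdd {L : ℝ} (hL : 0 ≤ L) {f : X0 × U0 × ProbabilityMeasure X → ℝ} (hf : Lip3 L f) :
    ∃ C, ∀ s, |f s| ≤ C := by
  rcases isEmpty_or_nonempty (X0 × U0 × ProbabilityMeasure X) with h | ⟨⟨s0⟩⟩
  · exact ⟨0, fun s => h.elim s⟩
  refine ⟨|f s0| + L * (dm X0 + dm U0 + 2 * dm X), fun s => ?_⟩
  have h1 := hf s s0
  have h2 : L * (dist s.1 s0.1 + dist s.2.1 s0.2.1 + W1 s.2.2 s0.2.2)
      ≤ L * (dm X0 + dm U0 + 2 * dm X) := by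
    gcongr
    · exact aux_dist_le _ _
    · exact aux_dist_le _ _
    · exact W1_le_dm _ _
  have h3 := abs_sub_abs_le_abs_sub (f s) (f s0)
  linarith

lemma Lip2.meas {L : ℝ} (hL : 0 ≤ L) {g : X0 → ProbabilityMeasure X → ℝ} (hg : Lip2 L g) :
    Measurable fun z : X0 × ProbabilityMeasure X => g z.1 z.2 :=
  aux_lip_meas _ L hL fun a a' μ μ' => hg a a' μ μ'

lemma Lip2.bdd {L : ℝ} (hL : 0 ≤ L) {g : X0 → ProbabilityMeasure X → ℝ} (hg : Lip2 L g) :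
    ∃ C, ∀ x μ, |g x μ| ≤ C := by
  rcases isEmpty_or_nonempty (X0 × ProbabilityMeasure X) with h | ⟨⟨s0⟩⟩
  · exact ⟨0, fun s μ => h.elim (s, μ)⟩
  refine ⟨|g s0.1 s0.2| + L * (dm X0 + 2 * dm X), fun x μ => ?_⟩
  have h1 := hg x s0.1 μ s0.2
  have h2 : L * (dist x s0.1 + W1 μ s0.2) ≤ L * (dm X0 + 2 * dm X) := by
    gcongr
    · exact aux_dist_le _ _
    · exact W1_le_dm _ _
  have h3 := abs_sub_abs_le_abs_sub (g x μ) (g s0.1 s0.2)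
  linarith

section pol0
variable {LPi : ℝ} (hLPi : 0 ≤ LPi) (π0 : X0 → ProbabilityMeasure X → ProbabilityMeasure U0)
  (hπ0 : ∀ (x0 x0' : X0) (μ μ' : ProbabilityMeasure X) (g : U0 → ℝ),
        LipschitzWith 1 g →
      |∫ u, g u ∂(π0 x0 μ : Measure U0) - ∫ u, g u ∂(π0 x0' μ' : Measure U0)|
        ≤ LPi * (dist x0 x0' + W1 μ μ'))

noncomputable def avg0 (π0 : X0 → ProbabilityMeasure X → ProbabilityMeasure U0)
    (f : X0 × U0 × ProbabilityMeasure X → ℝ) (x : X0) (μ : ProbabilityMeasure X) : ℝ :=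
  ∫ u, f (x, u, μ) ∂(π0 x μ : Measure U0)

include hπ0

lemma avg0_lip {L : ℝ} (hL : 0 ≤ L) {f : X0 × U0 × ProbabilityMeasure X → ℝ} (hf : Lip3 L f) :
    Lip2 (L * (1 + LPi)) (avg0 π0 f) := by
  intro x x' μ μ'
  have := aux_step (π0 x μ) (π0 x' μ') (hπ0 x x' μ μ') (f := fun u => f (x, u, μ))
    (f' := fun u => f (x', u, μ')) (L := L) (A := L * (dist x x' + W1 μ μ')) hL
    (fun y z => by simpa [W1_self] using hf (x, y, μ) (x, z, μ))
    (fun y z => by simpa [W1_self] using hf (x', y, μ') (x', z, μ'))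
    (fun y => by simpa using hf (x, y, μ) (x', y, μ'))
  calc _ ≤ _ := this
    _ = _ := by ring

include hLPi in
lemma pol0_meas : Measurable fun z : X0 × ProbabilityMeasure X => (π0 z.1 z.2 : Measure U0) :=
  aux_kernel_meas (fun z : X0 × ProbabilityMeasure X => π0 z.1 z.2) fun g hg =>
    aux_lip_meas _ LPi hLPi fun a a' μ μ' => hπ0 a a' μ μ' g hg

include hLPi in
lemma act_kernel_meas (N : ℕ) : Measurable fun y : X0 × (Fin N → X) =>
    ((π0 y.1 (emp N y.2) : Measure U0)).map fun u0 => (y.1, u0, y.2) := by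
  refine aux_map_meas (fun y : X0 × (Fin N → X) => (π0 y.1 (emp N y.2) : Measure U0)) ?_
    (fun y u0 => (y.1, u0, y.2)) ?_
  · exact (pol0_meas hLPi π0 hπ0).comp
      (measurable_fst.prodMk ((emp_meas N).comp measurable_snd))
  · exact measurable_fst.fst.prodMk (measurable_snd.prodMk measurable_fst.snd)

lemma act_kernel_prob (N : ℕ) (y : X0 × (Fin N → X)) : IsProbabilityMeasure
    (((π0 y.1 (emp N y.2) : Measure U0)).map fun u0 => (y.1, u0, y.2)) :=
  Measure.isProbabilityMeasure_map
    (measurable_const.prodMk (measurable_id.prodMk measurable_const)).aemeasurable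

include hLPi in
lemma act_int (N : ℕ) (ν : Measure (X0 × (Fin N → X))) [IsProbabilityMeasure ν]
    {L : ℝ} (hL : 0 ≤ L) {f : X0 × U0 × ProbabilityMeasure X → ℝ} (hf : Lip3 L f) :
    ∫ s, f (s.1, s.2.1, emp N s.2.2) ∂(ν.bind fun y =>
      ((π0 y.1 (emp N y.2) : Measure U0)).map fun u0 => (y.1, u0, y.2))
      = ∫ y, avg0 π0 f y.1 (emp N y.2) ∂ν := by
  obtain ⟨C, hC⟩ := hf.bdd hL
  have hm : Measurable fun s : X0 × U0 × (Fin N → X) => f (s.1, s.2.1, emp N s.2.2) :=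
    (hf.meas hL).comp (measurable_fst.prodMk (measurable_snd.fst.prodMk
      ((emp_meas N).comp measurable_snd.snd)))
  have := act_kernel_prob π0 hπ0 N
  rw [aux_integral_bind ν _ (act_kernel_meas hLPi π0 hπ0 N) _ hm C (fun s => hC _)]
  refine integral_congr_ae (ae_of_all _ fun y => ?_)
  simp only
  rw [integral_map (Measurable.aemeasurable (by fun_prop)) hm.aestronglyMeasurable]
  rfl

end pol0
section trans
variable {Lp Lp0 LPi : ℝ} (hLp : 0 ≤ Lp) (hLp0 : 0 ≤ Lp0) (hLPi : 0 ≤ LPi)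
    (p : X → U → X0 → U0 → ProbabilityMeasure X → ProbabilityMeasure X)
    (hp : ∀ (x x' : X) (u u' : U) (x0 x0' : X0) (u0 u0' : U0)
        (μ μ' : ProbabilityMeasure X) (f : X → ℝ), LipschitzWith 1 f →
      |∫ y, f y ∂(p x u x0 u0 μ : Measure X) - ∫ y, f y ∂(p x' u' x0' u0' μ' : Measure X)|
        ≤ Lp * (dist x x' + dist u u' + dist x0 x0' + dist u0 u0' + W1 μ μ'))
    (p0 : X0 → U0 → ProbabilityMeasure X → ProbabilityMeasure X0)
    (hp0 : ∀ (x0 x0' : X0) (u0 u0' : U0) (μ μ' : ProbabilityMeasure X) (f : X0 → ℝ),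
        LipschitzWith 1 f →
      |∫ y, f y ∂(p0 x0 u0 μ : Measure X0) - ∫ y, f y ∂(p0 x0' u0' μ' : Measure X0)|
        ≤ Lp0 * (dist x0 x0' + dist u0 u0' + W1 μ μ'))
    (π : X → X0 → ProbabilityMeasure X → ProbabilityMeasure U)
    (hπ : ∀ (x x' : X) (x0 x0' : X0) (μ μ' : ProbabilityMeasure X)
        (g : U → ℝ), LipschitzWith 1 g →
      |∫ u, g u ∂(π x x0 μ : Measure U) - ∫ u, g u ∂(π x' x0' μ' : Measure U)|
        ≤ LPi * (dist x x' + dist x0 x0' + W1 μ μ'))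
    (T : X0 → U0 → ProbabilityMeasure X → ProbabilityMeasure X)
    (hT : ∀ (x0 : X0) (u0 : U0) (μ : ProbabilityMeasure X),
      (T x0 u0 μ : Measure X) = (μ : Measure X).bind fun x =>
        ((π x x0 μ : Measure U)).bind fun u => (p x u x0 u0 μ : Measure X))

include hLp0 hp0 in
lemma p0_meas : Measurable fun s : X0 × U0 × ProbabilityMeasure X =>
    (p0 s.1 s.2.1 s.2.2 : Measure X0) :=
  aux_kernel_meas (fun s : X0 × U0 × ProbabilityMeasure X => p0 s.1 s.2.1 s.2.2) fun g hg =>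
    Lip3.meas hLp0 fun a b => hp0 _ _ _ _ _ _ g hg

include hLPi hπ in
lemma pol_meas : Measurable fun z : (X × X0) × ProbabilityMeasure X =>
    (π z.1.1 z.1.2 z.2 : Measure U) := by
  refine aux_kernel_meas (fun z : (X × X0) × ProbabilityMeasure X => π z.1.1 z.1.2 z.2)
    fun g hg => aux_lip_meas _ (2 * LPi) (by positivity) fun a a' μ μ' =>
      (hπ _ _ _ _ _ _ g hg).trans ?_
  have h1 : dist a.1 a'.1 ≤ dist a a' := le_max_left _ _
  have h2 : dist a.2 a'.2 ≤ dist a a' := le_max_right _ _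
  have h3 := W1_nonneg μ μ'
  simp only
  calc _ ≤ LPi * (2 * (dist a a' + W1 μ μ')) := by gcongr; linarith
    _ = _ := by ring

include hLp hp in
lemma p_meas : Measurable fun z : (X × U × X0 × U0) × ProbabilityMeasure X =>
    (p z.1.1 z.1.2.1 z.1.2.2.1 z.1.2.2.2 z.2 : Measure X) := by
  refine aux_kernel_meas (fun z : (X × U × X0 × U0) × ProbabilityMeasure X =>
    p z.1.1 z.1.2.1 z.1.2.2.1 z.1.2.2.2 z.2)
    fun g hg => aux_lip_meas _ (4 * Lp) (by positivity) fun a a' μ μ' =>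
      (hp _ _ _ _ _ _ _ _ _ _ g hg).trans ?_
  have h1 : dist a.1 a'.1 ≤ dist a a' := le_max_left _ _
  have h2 : dist a.2 a'.2 ≤ dist a a' := le_max_right _ _
  have h3 : dist a.2.1 a'.2.1 ≤ dist a.2 a'.2 := le_max_left _ _
  have h4 : dist a.2.2 a'.2.2 ≤ dist a.2 a'.2 := le_max_right _ _
  have h5 : dist a.2.2.1 a'.2.2.1 ≤ dist a.2.2 a'.2.2 := le_max_left _ _
  have h6 : dist a.2.2.2 a'.2.2.2 ≤ dist a.2.2 a'.2.2 := le_max_right _ _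
  have h7 := W1_nonneg μ μ'
  simp only
  calc _ ≤ Lp * (4 * (dist a a' + W1 μ μ')) := by gcongr; linarith
    _ = _ := by ring

noncomputable def agentK (p : X → U → X0 → U0 → ProbabilityMeasure X → ProbabilityMeasure X)
    (π : X → X0 → ProbabilityMeasure X → ProbabilityMeasure U)
    (x : X) (x0 : X0) (u0 : U0) (μ : ProbabilityMeasure X) : Measure X :=
  ((π x x0 μ : Measure U)).bind fun u => (p x u x0 u0 μ : Measure X)

include hLp hp in
lemma p_meas_u (x : X) (x0 : X0) (u0 : U0) (μ : ProbabilityMeasure X) :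
    Measurable fun u => (p x u x0 u0 μ : Measure X) :=
  (p_meas hLp p hp).comp (f := fun u : U => ((x, u, x0, u0), μ))
    ((measurable_const.prodMk (measurable_id.prodMk measurable_const)).prodMk measurable_const)

include hLp hp in
lemma agentK_prob (x : X) (x0 : X0) (u0 : U0) (μ : ProbabilityMeasure X) :
    IsProbabilityMeasure (agentK p π x x0 u0 μ) :=
  aux_bind_prob _ _ (p_meas_u hLp p hp x x0 u0 μ)

include hLp hp hLPi hπ in
lemma agentK_meas : Measurable fun z : X × X0 × U0 × ProbabilityMeasure X =>
    agentK p π z.1 z.2.1 z.2.2.1 z.2.2.2 := by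
  refine aux_bind_meas (fun z : X × X0 × U0 × ProbabilityMeasure X =>
    (π z.1 z.2.1 z.2.2.2 : Measure U)) ?_
    (fun z u => (p z.1 u z.2.1 z.2.2.1 z.2.2.2 : Measure X)) ?_
  · exact (pol_meas hLPi π hπ).comp
      (f := fun z : X × X0 × U0 × ProbabilityMeasure X => ((z.1, z.2.1), z.2.2.2)) (by fun_prop)
  · exact (p_meas hLp p hp).comp
      (f := fun w : (X × X0 × U0 × ProbabilityMeasure X) × U =>
        ((w.1.1, w.2, w.1.2.1, w.1.2.2.1), w.1.2.2.2)) (by fun_prop)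

include hLp hp in
lemma agentK_int (x : X) (x0 : X0) (u0 : U0) (μ : ProbabilityMeasure X) {φ : X → ℝ}
    (hφ : Continuous φ) : ∫ y, φ y ∂(agentK p π x x0 u0 μ)
      = ∫ u, ∫ y, φ y ∂(p x u x0 u0 μ : Measure X) ∂(π x x0 μ : Measure U) := by
  obtain ⟨C, hC⟩ := isCompact_univ.exists_bound_of_continuousOn hφ.continuousOn
  exact aux_integral_bind _ _ (p_meas_u hLp p hp x x0 u0 μ) φ hφ.measurable C
    (fun b => hC b (Set.mem_univ b))

include hLp hp hLPi hπ in
lemma agentK_lip {φ : X → ℝ} (hφ : LipschitzWith 1 φ)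
    (x x' : X) (x0 x0' : X0) (u0 u0' : U0) (μ μ' : ProbabilityMeasure X) :
    |∫ y, φ y ∂(agentK p π x x0 u0 μ) - ∫ y, φ y ∂(agentK p π x' x0' u0' μ')|
      ≤ Lp * (1 + LPi) * (dist x x' + dist x0 x0' + dist u0 u0' + W1 μ μ') := by
  rw [agentK_int hLp p hp π x x0 u0 μ hφ.continuous, agentK_int hLp p hp π x' x0' u0' μ' hφ.continuous]
  have := aux_step (π x x0 μ) (π x' x0' μ') (hπ x x' x0 x0' μ μ')
    (f := fun u => ∫ y, φ y ∂(p x u x0 u0 μ : Measure X))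
    (f' := fun u => ∫ y, φ y ∂(p x' u x0' u0' μ' : Measure X)) (L := Lp)
    (A := Lp * (dist x x' + dist x0 x0' + dist u0 u0' + W1 μ μ')) hLp
    (fun y z => by simpa [W1_self] using hp x x y z x0 x0 u0 u0 μ μ φ hφ)
    (fun y z => by simpa [W1_self] using hp x' x' y z x0' x0' u0' u0' μ' μ' φ hφ)
    (fun y => by simpa using hp x x' y y x0 x0' u0 u0' μ μ' φ hφ)
  have h2 := dist_nonneg (x := u0) (y := u0')
  have h4 : dist x x' + dist x0 x0' + W1 μ μ'
      ≤ dist x x' + dist x0 x0' + dist u0 u0' + W1 μ μ' := by linarith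
  have h5 := mul_le_mul_of_nonneg_left (mul_le_mul_of_nonneg_left h4 hLPi) hLp
  calc _ ≤ _ := this
    _ ≤ Lp * (dist x x' + dist x0 x0' + dist u0 u0' + W1 μ μ') +
      Lp * (LPi * (dist x x' + dist x0 x0' + dist u0 u0' + W1 μ μ')) := by linarith
    _ = _ := by ring

include hLp hp hLPi hπ hT in
lemma T_int (x0 : X0) (u0 : U0) (μ : ProbabilityMeasure X) {φ : X → ℝ}
    (hφ : Continuous φ) : ∫ y, φ y ∂(T x0 u0 μ : Measure X)
      = ∫ x, ∫ y, φ y ∂(agentK p π x x0 u0 μ) ∂(μ : Measure X) := by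
  obtain ⟨C, hC⟩ := isCompact_univ.exists_bound_of_continuousOn hφ.continuousOn
  rw [hT]
  have := fun x => agentK_prob hLp p hp π x x0 u0 μ
  exact aux_integral_bind _ (fun x => agentK p π x x0 u0 μ)
    ((agentK_meas hLp hLPi p hp π hπ).comp (f := fun x : X => (x, x0, u0, μ)) (by fun_prop))
    φ hφ.measurable C (fun b => hC b (Set.mem_univ b))

include hLp hp hLPi hπ hT in
lemma T_lip (x0 x0' : X0) (u0 u0' : U0) (μ μ' : ProbabilityMeasure X) :
    W1 (T x0 u0 μ) (T x0' u0' μ')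
      ≤ 2 * (Lp * (1 + LPi)) * (dist x0 x0' + dist u0 u0' + W1 μ μ') := by
  have hw := W1_nonneg μ μ'
  refine W1_le _ _ (by positivity) fun φ hφ => ?_
  rw [T_int hLp hLPi p hp π hπ T hT x0 u0 μ hφ.continuous,
    T_int hLp hLPi p hp π hπ T hT x0' u0' μ' hφ.continuous]
  have hl := agentK_lip hLp hLPi p hp π hπ hφ
  have := aux_step μ μ' (fun g hg => le_W1 μ μ' hg)
    (f := fun x => ∫ y, φ y ∂(agentK p π x x0 u0 μ))
    (f' := fun x => ∫ y, φ y ∂(agentK p π x x0' u0' μ')) (L := Lp * (1 + LPi))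
    (A := Lp * (1 + LPi) * (dist x0 x0' + dist u0 u0' + W1 μ μ')) (by positivity)
    (fun y z => by simpa [W1_self] using hl y z x0 x0 u0 u0 μ μ)
    (fun y z => by simpa [W1_self] using hl y z x0' x0' u0' u0' μ' μ')
    (fun y => by simpa using hl y y x0 x0' u0 u0' μ μ')
  have h2 := dist_nonneg (x := u0) (y := u0')
  have h3 := dist_nonneg (x := x0) (y := x0')
  calc _ ≤ _ := this
    _ ≤ Lp * (1 + LPi) * (dist x0 x0' + dist u0 u0' + W1 μ μ') +
      Lp * (1 + LPi) * (dist x0 x0' + dist u0 u0' + W1 μ μ') := by gcongr; linarith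
    _ = _ := by ring

include hLp hp hLPi hπ hT in
lemma T_meas : Measurable fun s : X0 × U0 × ProbabilityMeasure X => T s.1 s.2.1 s.2.2 := by
  refine Measurable.subtype_mk (f := fun s : X0 × U0 × ProbabilityMeasure X =>
    ((T s.1 s.2.1 s.2.2 : ProbabilityMeasure X) : Measure X)) ?_
  refine aux_kernel_meas (fun s : X0 × U0 × ProbabilityMeasure X => T s.1 s.2.1 s.2.2)
    fun g hg => Lip3.meas (L := 2 * (Lp * (1 + LPi))) (by positivity) fun a b => ?_
  exact (le_W1 _ _ hg).trans (T_lip hLp hLPi p hp π hπ T hT _ _ _ _ _ _)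

noncomputable def backOp (p0 : X0 → U0 → ProbabilityMeasure X → ProbabilityMeasure X0)
    (T : X0 → U0 → ProbabilityMeasure X → ProbabilityMeasure X)
    (G : X0 → ProbabilityMeasure X → ℝ) (s : X0 × U0 × ProbabilityMeasure X) : ℝ :=
  ∫ y, G y (T s.1 s.2.1 s.2.2) ∂(p0 s.1 s.2.1 s.2.2 : Measure X0)

include hLp hp hLPi hπ hT hp0 in
lemma backOp_lip {L : ℝ} (hL : 0 ≤ L) {G : X0 → ProbabilityMeasure X → ℝ} (hG : Lip2 L G) :
    Lip3 (L * (2 * (Lp * (1 + LPi)) + Lp0)) (backOp p0 T G) := by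
  intro a b
  have := aux_step (p0 a.1 a.2.1 a.2.2) (p0 b.1 b.2.1 b.2.2) (hp0 _ _ _ _ _ _)
    (f := fun y => G y (T a.1 a.2.1 a.2.2)) (f' := fun y => G y (T b.1 b.2.1 b.2.2)) (L := L)
    (A := L * (2 * (Lp * (1 + LPi)) * (dist a.1 b.1 + dist a.2.1 b.2.1 + W1 a.2.2 b.2.2))) hL
    (fun y z => by simpa [W1_self] using hG y z (T a.1 a.2.1 a.2.2) (T a.1 a.2.1 a.2.2))
    (fun y z => by simpa [W1_self] using hG y z (T b.1 b.2.1 b.2.2) (T b.1 b.2.1 b.2.2))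
    (fun y => by
      refine (hG y y _ _).trans ?_
      rw [dist_self, zero_add]
      exact mul_le_mul_of_nonneg_left (T_lip hLp hLPi p hp π hπ T hT _ _ _ _ _ _) hL)
  calc _ ≤ _ := this
    _ = _ := by ring

include hLp hp hLPi hπ hT in
lemma step_bound {N : ℕ} (hN : N ≠ 0) {e : ℝ} (hcb : chaosBound X N e)
    {L : ℝ} (hL : 0 ≤ L) {G : X0 → ProbabilityMeasure X → ℝ} (hG : Lip2 L G)
    (s : X0 × U0 × (Fin N → X)) :
    |∫ y, G y.1 (emp N y.2) ∂((p0 s.1 s.2.1 (emp N s.2.2) : Measure X0).prod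
        (Measure.pi fun i => agentK p π (s.2.2 i) s.1 s.2.1 (emp N s.2.2)))
      - backOp p0 T G (s.1, s.2.1, emp N s.2.2)| ≤ L * e := by
  have hK := fun x => agentK_prob hLp p hp π x s.1 s.2.1 (emp N s.2.2)
  set P : Fin N → Measure X := fun i => agentK p π (s.2.2 i) s.1 s.2.1 (emp N s.2.2) with hP
  set ν := T s.1 s.2.1 (emp N s.2.2) with hν
  set κ : Measure X0 := (p0 s.1 s.2.1 (emp N s.2.2) : Measure X0) with hκ
  have hPp : ∀ i, IsProbabilityMeasure (P i) := fun i => hK _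
  have hch : ∫ y, W1 (emp N y) ν ∂(Measure.pi P) ≤ e := by
    refine hcb P hPp ν fun φ hφ => ?_
    rw [hν, T_int hLp hLPi p hp π hπ T hT _ _ _ hφ]
    obtain ⟨C, hC⟩ := isCompact_univ.exists_bound_of_continuousOn hφ.continuousOn
    have hm : Measurable fun x => ∫ y, φ y ∂(agentK p π x s.1 s.2.1 (emp N s.2.2)) := by
      let k : Kernel X X := ⟨fun x => agentK p π x s.1 s.2.1 (emp N s.2.2),
        (agentK_meas hLp hLPi p hp π hπ).comp (f := fun x : X => (x, s.1, s.2.1, emp N s.2.2))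
          (by fun_prop)⟩
      have : IsMarkovKernel k := ⟨fun x => hK x⟩
      exact (hφ.measurable.stronglyMeasurable.integral_kernel (κ := k)).measurable
    rw [emp_int' hN _ hm (C := C) (fun x => by
      have := hK x
      have h1 := norm_integral_le_of_norm_le_const
        (μ := agentK p π x s.1 s.2.1 (emp N s.2.2)) (f := φ) (C := C)
        (ae_of_all _ fun x => hC x (Set.mem_univ x))
      simpa using h1)]
  obtain ⟨C, hC⟩ := hG.bdd hL
  have hm1 : Measurable fun y : X0 × (Fin N → X) => G y.1 (emp N y.2) :=
    (hG.meas hL).comp (measurable_fst.prodMk ((emp_meas N).comp measurable_snd))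
  have hm2 : Measurable fun y : X0 × (Fin N → X) => G y.1 ν :=
    (hG.meas hL).comp (f := fun y : X0 × (Fin N → X) => (y.1, ν)) (by fun_prop)
  have hi1 : Integrable (fun y : X0 × (Fin N → X) => G y.1 (emp N y.2)) (κ.prod (Measure.pi P)) :=
    Integrable.of_bound hm1.aestronglyMeasurable C (ae_of_all _ fun y => hC _ _)
  have hi2 : Integrable (fun y : X0 × (Fin N → X) => G y.1 ν) (κ.prod (Measure.pi P)) :=
    Integrable.of_bound hm2.aestronglyMeasurable C (ae_of_all _ fun y => hC _ _)
  have hm3 : Measurable fun y : Fin N → X => W1 (emp N y) ν := (aux_meas_W1 ν).comp (emp_meas N)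
  have hi3 : Integrable (fun y : X0 × (Fin N → X) => L * W1 (emp N y.2) ν)
      (κ.prod (Measure.pi P)) := by
    refine Integrable.const_mul ?_ L
    refine Integrable.of_bound (hm3.comp measurable_snd).aestronglyMeasurable (2 * dm X)
      (ae_of_all _ fun y => ?_)
    show |W1 (emp N y.2) ν| ≤ 2 * dm X
    rw [abs_of_nonneg (W1_nonneg _ _)]
    exact W1_le_dm _ _
  have h2 : backOp p0 T G (s.1, s.2.1, emp N s.2.2)
      = ∫ y, G y.1 ν ∂(κ.prod (Measure.pi P)) := by
    rw [integral_fun_fst (fun x => G x ν)]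
    simp [backOp, hν, hκ]
  rw [h2, ← integral_sub hi1 hi2]
  calc _ ≤ ∫ y, |G y.1 (emp N y.2) - G y.1 ν| ∂(κ.prod (Measure.pi P)) :=
        abs_integral_le_integral_abs
    _ ≤ ∫ y, L * W1 (emp N y.2) ν ∂(κ.prod (Measure.pi P)) := by
        refine integral_mono_of_nonneg (ae_of_all _ fun y => abs_nonneg _) hi3
          (ae_of_all _ fun y => ?_)
        simpa using hG y.1 y.1 (emp N y.2) ν
    _ = L * ∫ y, W1 (emp N y) ν ∂(Measure.pi P) := by
        rw [integral_const_mul, integral_fun_snd (fun y => W1 (emp N y) ν)]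
        simp
    _ ≤ L * e := mul_le_mul_of_nonneg_left hch hL

include hLp hp hLPi hπ hp0 hLp0 in
lemma trans_meas (N : ℕ) : Measurable fun s : X0 × U0 × (Fin N → X) =>
    (p0 s.1 s.2.1 (emp N s.2.2) : Measure X0).prod
        (Measure.pi fun i => agentK p π (s.2.2 i) s.1 s.2.1 (emp N s.2.2)) := by
  have hK := agentK_prob hLp p hp π
  have he : Measurable fun s : X0 × U0 × (Fin N → X) => emp N s.2.2 :=
    (emp_meas N).comp measurable_snd.snd
  have h1 : Measurable fun s : X0 × U0 × (Fin N → X) =>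
      (p0 s.1 s.2.1 (emp N s.2.2) : Measure X0) :=
    (p0_meas hLp0 p0 hp0).comp
      (f := fun s : X0 × U0 × (Fin N → X) => (s.1, s.2.1, emp N s.2.2))
      (measurable_fst.prodMk (measurable_snd.fst.prodMk he))
  have h2 : ∀ i : Fin N, Measurable fun s : X0 × U0 × (Fin N → X) =>
      agentK p π (s.2.2 i) s.1 s.2.1 (emp N s.2.2) := by
    intro i
    have h3 : Measurable fun s : X0 × U0 × (Fin N → X) => s.2.2 i :=
      (measurable_pi_apply i).comp measurable_snd.snd
    have h4 : Measurable fun s : X0 × U0 × (Fin N → X) => (s.2.2 i, s.1, s.2.1, emp N s.2.2) :=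
      h3.prodMk (measurable_fst.prodMk (measurable_snd.fst.prodMk he))
    have h0 := agentK_meas hLp hLPi p hp π hπ
    have h6 := Measurable.comp h0 h4
    exact h6
  have h5 : Measurable fun s : X0 × U0 × (Fin N → X) =>
      Measure.pi fun i => agentK p π (s.2.2 i) s.1 s.2.1 (emp N s.2.2) := by
    have : ∀ (s : X0 × U0 × (Fin N → X)) (i : Fin N), IsProbabilityMeasure
      (agentK p π (s.2.2 i) s.1 s.2.1 (emp N s.2.2)) := fun s i => hK _ _ _ _
    exact aux_pi_meas (fun (s : X0 × U0 × (Fin N → X)) i =>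
      agentK p π (s.2.2 i) s.1 s.2.1 (emp N s.2.2)) h2
  have : ∀ s : X0 × U0 × (Fin N → X), IsProbabilityMeasure
      (Measure.pi fun i => agentK p π (s.2.2 i) s.1 s.2.1 (emp N s.2.2)) := fun s => by
    have : ∀ (i : Fin N), IsProbabilityMeasure
      (agentK p π (s.2.2 i) s.1 s.2.1 (emp N s.2.2)) := fun i => hK _ _ _ _
    infer_instance
  exact aux_prod_meas (fun s : X0 × U0 × (Fin N → X) =>
    (p0 s.1 s.2.1 (emp N s.2.2) : Measure X0)) h1
    (fun s => Measure.pi fun i => agentK p π (s.2.2 i) s.1 s.2.1 (emp N s.2.2)) h5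

end trans

lemma lim_map_prob (κ : ProbabilityMeasure U0) (y0 : X0) (ν : ProbabilityMeasure X) :
    IsProbabilityMeasure ((κ : Measure U0).map fun u0 => (y0, u0, ν)) :=
  Measure.isProbabilityMeasure_map
    (measurable_const.prodMk (measurable_id.prodMk measurable_const)).aemeasurable

lemma lim_kernel_meas_in (π0 : X0 → ProbabilityMeasure X → ProbabilityMeasure U0)
    (hπm : Measurable fun z : X0 × ProbabilityMeasure X => (π0 z.1 z.2 : Measure U0)) :
    Measurable fun z : X0 × ProbabilityMeasure X =>
      (π0 z.1 z.2 : Measure U0).map fun u0 => (z.1, u0, z.2) :=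
  aux_map_meas (fun z : X0 × ProbabilityMeasure X => (π0 z.1 z.2 : Measure U0)) hπm
    (fun z u0 => (z.1, u0, z.2))
    (measurable_fst.fst.prodMk (measurable_snd.prodMk measurable_fst.snd))

lemma lim_kernel_meas (p0 : X0 → U0 → ProbabilityMeasure X → ProbabilityMeasure X0)
    (hp0m : Measurable fun s : X0 × U0 × ProbabilityMeasure X =>
      (p0 s.1 s.2.1 s.2.2 : Measure X0))
    (T : X0 → U0 → ProbabilityMeasure X → ProbabilityMeasure X)
    (hTm : Measurable fun s : X0 × U0 × ProbabilityMeasure X => T s.1 s.2.1 s.2.2)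
    (π0 : X0 → ProbabilityMeasure X → ProbabilityMeasure U0)
    (hπm : Measurable fun z : X0 × ProbabilityMeasure X => (π0 z.1 z.2 : Measure U0)) :
    Measurable fun s : X0 × U0 × ProbabilityMeasure X =>
      (p0 s.1 s.2.1 s.2.2 : Measure X0).bind fun y0 =>
        (π0 y0 (T s.1 s.2.1 s.2.2) : Measure U0).map fun u0 => (y0, u0, T s.1 s.2.1 s.2.2) := by
  have h0 := lim_kernel_meas_in π0 hπm
  have h1 : Measurable fun w : (X0 × U0 × ProbabilityMeasure X) × X0 =>
      (w.2, T w.1.1 w.1.2.1 w.1.2.2) := measurable_snd.prodMk (hTm.comp measurable_fst)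
  have h2 := h0.comp h1
  exact aux_bind_meas (fun s : X0 × U0 × ProbabilityMeasure X =>
    (p0 s.1 s.2.1 s.2.2 : Measure X0)) hp0m
    (fun s y0 => (π0 y0 (T s.1 s.2.1 s.2.2) : Measure U0).map
      fun u0 => (y0, u0, T s.1 s.2.1 s.2.2)) h2

lemma lim_kernel_meas_y (T : ProbabilityMeasure X)
    (π0 : X0 → ProbabilityMeasure X → ProbabilityMeasure U0)
    (hπm : Measurable fun z : X0 × ProbabilityMeasure X => (π0 z.1 z.2 : Measure U0)) :
    Measurable fun y0 : X0 => (π0 y0 T : Measure U0).map fun u0 => (y0, u0, T) := by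
  have h0 := lim_kernel_meas_in π0 hπm
  have h1 : Measurable fun y : X0 => (y, T) := measurable_id.prodMk measurable_const
  exact h0.comp h1

lemma lim_map_int (κ : ProbabilityMeasure U0) (y0 : X0) (ν : ProbabilityMeasure X)
    {f : X0 × U0 × ProbabilityMeasure X → ℝ} (hf : Measurable f) :
    ∫ s, f s ∂((κ : Measure U0).map fun u0 => (y0, u0, ν))
      = ∫ u, f (y0, u, ν) ∂(κ : Measure U0) :=
  integral_map (measurable_const.prodMk (measurable_id.prodMk measurable_const)).aemeasurable
    hf.aestronglyMeasurable

lemma lim_step_int (p0 : X0 → U0 → ProbabilityMeasure X → ProbabilityMeasure X0)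
    (hp0m : Measurable fun s : X0 × U0 × ProbabilityMeasure X =>
      (p0 s.1 s.2.1 s.2.2 : Measure X0))
    (T : X0 → U0 → ProbabilityMeasure X → ProbabilityMeasure X)
    (hTm : Measurable fun s : X0 × U0 × ProbabilityMeasure X => T s.1 s.2.1 s.2.2)
    (π0 : X0 → ProbabilityMeasure X → ProbabilityMeasure U0)
    (hπm : Measurable fun z : X0 × ProbabilityMeasure X => (π0 z.1 z.2 : Measure U0))
    (ν : Measure (X0 × U0 × ProbabilityMeasure X)) [IsProbabilityMeasure ν] :
    IsProbabilityMeasure (ν.bind fun s : X0 × U0 × ProbabilityMeasure X =>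
      (p0 s.1 s.2.1 s.2.2 : Measure X0).bind fun y0 =>
        (π0 y0 (T s.1 s.2.1 s.2.2) : Measure U0).map fun u0 => (y0, u0, T s.1 s.2.1 s.2.2)) ∧
    ∀ (f : X0 × U0 × ProbabilityMeasure X → ℝ), Measurable f → ∀ C : ℝ, (∀ s, |f s| ≤ C) →
      ∫ s, f s ∂(ν.bind fun s : X0 × U0 × ProbabilityMeasure X =>
      (p0 s.1 s.2.1 s.2.2 : Measure X0).bind fun y0 =>
        (π0 y0 (T s.1 s.2.1 s.2.2) : Measure U0).map fun u0 => (y0, u0, T s.1 s.2.1 s.2.2))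
      = ∫ s, backOp p0 T (avg0 π0 f) s ∂ν := by
  have hin : ∀ (t : ProbabilityMeasure X) (y0 : X0), IsProbabilityMeasure
      ((π0 y0 t : Measure U0).map fun u0 => (y0, u0, t)) := fun t y0 => lim_map_prob _ _ _
  have hb : ∀ s : X0 × U0 × ProbabilityMeasure X, IsProbabilityMeasure
      ((p0 s.1 s.2.1 s.2.2 : Measure X0).bind fun y0 =>
        (π0 y0 (T s.1 s.2.1 s.2.2) : Measure U0).map fun u0 => (y0, u0, T s.1 s.2.1 s.2.2)) := by
    intro s
    have := hin (T s.1 s.2.1 s.2.2)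
    exact aux_bind_prob _ _ (lim_kernel_meas_y (T s.1 s.2.1 s.2.2) π0 hπm)
  have hm := lim_kernel_meas p0 hp0m T hTm π0 hπm
  refine ⟨aux_bind_prob ν _ hm, fun f hf C hC => ?_⟩
  rw [aux_integral_bind ν _ hm f hf C hC]
  refine integral_congr_ae (ae_of_all _ fun s => ?_)
  have := hin (T s.1 s.2.1 s.2.2)
  simp only
  rw [aux_integral_bind _ _ (lim_kernel_meas_y (T s.1 s.2.1 s.2.2) π0 hπm) f hf C hC]
  refine integral_congr_ae (ae_of_all _ fun y => ?_)
  exact lim_map_int _ _ _ hf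

section final
variable {Lp Lp0 LPi : ℝ} (hLp : 0 ≤ Lp) (hLp0 : 0 ≤ Lp0) (hLPi : 0 ≤ LPi)
    (p : X → U → X0 → U0 → ProbabilityMeasure X → ProbabilityMeasure X)
    (hp : ∀ (x x' : X) (u u' : U) (x0 x0' : X0) (u0 u0' : U0)
        (μ μ' : ProbabilityMeasure X) (f : X → ℝ), LipschitzWith 1 f →
      |∫ y, f y ∂(p x u x0 u0 μ : Measure X) - ∫ y, f y ∂(p x' u' x0' u0' μ' : Measure X)|
        ≤ Lp * (dist x x' + dist u u' + dist x0 x0' + dist u0 u0' + W1 μ μ'))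
    (p0 : X0 → U0 → ProbabilityMeasure X → ProbabilityMeasure X0)
    (hp0 : ∀ (x0 x0' : X0) (u0 u0' : U0) (μ μ' : ProbabilityMeasure X) (f : X0 → ℝ),
        LipschitzWith 1 f →
      |∫ y, f y ∂(p0 x0 u0 μ : Measure X0) - ∫ y, f y ∂(p0 x0' u0' μ' : Measure X0)|
        ≤ Lp0 * (dist x0 x0' + dist u0 u0' + W1 μ μ'))
    (Pi : Set (ℕ → X → X0 → ProbabilityMeasure X → ProbabilityMeasure U))
    (hPi : ∀ π ∈ Pi, ∀ (t : ℕ) (x x' : X) (x0 x0' : X0) (μ μ' : ProbabilityMeasure X)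
        (g : U → ℝ), LipschitzWith 1 g →
      |∫ u, g u ∂(π t x x0 μ : Measure U) - ∫ u, g u ∂(π t x' x0' μ' : Measure U)|
        ≤ LPi * (dist x x' + dist x0 x0' + W1 μ μ'))
    (Pi0 : Set (ℕ → X0 → ProbabilityMeasure X → ProbabilityMeasure U0))
    (hPi0 : ∀ π0 ∈ Pi0, ∀ (t : ℕ) (x0 x0' : X0) (μ μ' : ProbabilityMeasure X) (g : U0 → ℝ),
        LipschitzWith 1 g →
      |∫ u, g u ∂(π0 t x0 μ : Measure U0) - ∫ u, g u ∂(π0 t x0' μ' : Measure U0)|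
        ≤ LPi * (dist x0 x0' + W1 μ μ'))
    (μ0 : ProbabilityMeasure X) (x00 : X0)
    (Tcl : (ℕ → X → X0 → ProbabilityMeasure X → ProbabilityMeasure U) →
      ℕ → X0 → U0 → ProbabilityMeasure X → ProbabilityMeasure X)
    (hTcl : ∀ q ∈ Pi, ∀ (t : ℕ) (x0 : X0) (u0 : U0) (μ : ProbabilityMeasure X),
      (Tcl q t x0 u0 μ : Measure X) = (μ : Measure X).bind fun x =>
        ((q t x x0 μ : Measure U)).bind fun u => (p x u x0 u0 μ : Measure X))

include hLp hLp0 hLPi hp hp0 hPi hPi0 hTcl in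
lemma lim_prob {q} (hq : q ∈ Pi) {q0} (hq0 : q0 ∈ Pi0) (t : ℕ) :
    IsProbabilityMeasure (m3LimLaw p0 q0 (Tcl q) μ0 x00 t) := by
  induction t with
  | zero => exact lim_map_prob _ _ _
  | succ t ih =>
    exact (lim_step_int p0 (p0_meas hLp0 p0 hp0) (Tcl q t)
      (T_meas hLp hLPi p hp (q t) (hPi q hq t) (Tcl q t) (hTcl q hq t)) (q0 (t+1))
      (pol0_meas hLPi (q0 (t+1)) (hPi0 q0 hq0 (t+1))) _).1

include hLp hLp0 hLPi hp hp0 hPi hPi0 hTcl in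
lemma lim_int {q} (hq : q ∈ Pi) {q0} (hq0 : q0 ∈ Pi0) (t : ℕ) {L : ℝ} (hL : 0 ≤ L)
    {f : X0 × U0 × ProbabilityMeasure X → ℝ} (hf : Lip3 L f) :
    ∫ s, f s ∂(m3LimLaw p0 q0 (Tcl q) μ0 x00 (t + 1))
      = ∫ s, backOp p0 (Tcl q t) (avg0 (q0 (t+1)) f) s ∂(m3LimLaw p0 q0 (Tcl q) μ0 x00 t) := by
  have := lim_prob hLp hLp0 hLPi p hp p0 hp0 Pi hPi Pi0 hPi0 μ0 x00 Tcl hTcl hq hq0 t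
  obtain ⟨C, hC⟩ := hf.bdd hL
  exact (lim_step_int p0 (p0_meas hLp0 p0 hp0) (Tcl q t)
      (T_meas hLp hLPi p hp (q t) (hPi q hq t) (Tcl q t) (hTcl q hq t)) (q0 (t+1))
      (pol0_meas hLPi (q0 (t+1)) (hPi0 q0 hq0 (t+1))) _).2 f (hf.meas hL) C hC

include hLp hp in
lemma trans_prob (π : X → X0 → ProbabilityMeasure X → ProbabilityMeasure U) (N : ℕ)
    (s : X0 × U0 × (Fin N → X)) : IsProbabilityMeasure
    ((p0 s.1 s.2.1 (emp N s.2.2) : Measure X0).prod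
        (Measure.pi fun i => agentK p π (s.2.2 i) s.1 s.2.1 (emp N s.2.2))) := by
  have : ∀ (i : Fin N), IsProbabilityMeasure
      (agentK p π (s.2.2 i) s.1 s.2.1 (emp N s.2.2)) := fun i => agentK_prob hLp p hp π _ _ _ _
  infer_instance

include hLp hLp0 hLPi hp hp0 in
lemma lawN_step (π : X → X0 → ProbabilityMeasure X → ProbabilityMeasure U)
    (hπ : ∀ (x x' : X) (x0 x0' : X0) (μ μ' : ProbabilityMeasure X)
        (g : U → ℝ), LipschitzWith 1 g →
      |∫ u, g u ∂(π x x0 μ : Measure U) - ∫ u, g u ∂(π x' x0' μ' : Measure U)|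
        ≤ LPi * (dist x x' + dist x0 x0' + W1 μ μ'))
    (π0 : X0 → ProbabilityMeasure X → ProbabilityMeasure U0)
    (hπ0 : ∀ (x0 x0' : X0) (μ μ' : ProbabilityMeasure X) (g : U0 → ℝ),
        LipschitzWith 1 g →
      |∫ u, g u ∂(π0 x0 μ : Measure U0) - ∫ u, g u ∂(π0 x0' μ' : Measure U0)|
        ≤ LPi * (dist x0 x0' + W1 μ μ')) (N : ℕ)
    (ν : Measure (X0 × U0 × (Fin N → X))) [IsProbabilityMeasure ν] :
    IsProbabilityMeasure (ν.bind fun s => ((p0 s.1 s.2.1 (emp N s.2.2) : Measure X0).prod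
        (Measure.pi fun i => agentK p π (s.2.2 i) s.1 s.2.1 (emp N s.2.2))).bind
        fun y => ((π0 y.1 (emp N y.2) : Measure U0)).map fun u0 => (y.1, u0, y.2)) ∧
    ∀ (L : ℝ), 0 ≤ L → ∀ f : X0 × U0 × ProbabilityMeasure X → ℝ, Lip3 L f →
    ∫ s, f (s.1, s.2.1, emp N s.2.2) ∂(ν.bind fun s =>
      ((p0 s.1 s.2.1 (emp N s.2.2) : Measure X0).prod
        (Measure.pi fun i => agentK p π (s.2.2 i) s.1 s.2.1 (emp N s.2.2))).bind
        fun y => ((π0 y.1 (emp N y.2) : Measure U0)).map fun u0 => (y.1, u0, y.2))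
     = ∫ s, ∫ y, avg0 π0 f y.1 (emp N y.2) ∂((p0 s.1 s.2.1 (emp N s.2.2) : Measure X0).prod
        (Measure.pi fun i => agentK p π (s.2.2 i) s.1 s.2.1 (emp N s.2.2))) ∂ν := by
  have hK := trans_prob hLp p hp p0 π N
  have hA := act_kernel_prob π0 hπ0 N
  have hAm := act_kernel_meas hLPi π0 hπ0 N
  have hAm' : Measurable fun w : (X0 × U0 × (Fin N → X)) × (X0 × (Fin N → X)) =>
    ((π0 w.2.1 (emp N w.2.2) : Measure U0)).map fun u0 => (w.2.1, u0, w.2.2) :=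
    hAm.comp measurable_snd
  have hKm := trans_meas hLp hLp0 hLPi p hp p0 hp0 π hπ N
  have hB : ∀ s : X0 × U0 × (Fin N → X), IsProbabilityMeasure
      (((p0 s.1 s.2.1 (emp N s.2.2) : Measure X0).prod
        (Measure.pi fun i => agentK p π (s.2.2 i) s.1 s.2.1 (emp N s.2.2))).bind
        fun y => ((π0 y.1 (emp N y.2) : Measure U0)).map fun u0 => (y.1, u0, y.2)) :=
    fun s => aux_bind_prob _ _ hAm
  have hBm := aux_bind_meas (fun s : X0 × U0 × (Fin N → X) =>
      ((p0 s.1 s.2.1 (emp N s.2.2) : Measure X0).prod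
        (Measure.pi fun i => agentK p π (s.2.2 i) s.1 s.2.1 (emp N s.2.2)))) hKm
      (fun _ y => ((π0 y.1 (emp N y.2) : Measure U0)).map fun u0 => (y.1, u0, y.2)) hAm'
  refine ⟨aux_bind_prob ν _ hBm, fun L hL f hf => ?_⟩
  obtain ⟨C, hC⟩ := hf.bdd hL
  have hm : Measurable fun s : X0 × U0 × (Fin N → X) => f (s.1, s.2.1, emp N s.2.2) :=
    (hf.meas hL).comp (measurable_fst.prodMk (measurable_snd.fst.prodMk
      ((emp_meas N).comp measurable_snd.snd)))
  rw [aux_integral_bind ν _ hBm _ hm C (fun s => hC _)]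
  refine integral_congr_ae (ae_of_all _ fun s => ?_)
  exact act_int hLPi π0 hπ0 N _ hL hf

include hLPi in
lemma lawN_zero (π0 : X0 → ProbabilityMeasure X → ProbabilityMeasure U0)
    (hπ0 : ∀ (x0 x0' : X0) (μ μ' : ProbabilityMeasure X) (g : U0 → ℝ),
        LipschitzWith 1 g →
      |∫ u, g u ∂(π0 x0 μ : Measure U0) - ∫ u, g u ∂(π0 x0' μ' : Measure U0)|
        ≤ LPi * (dist x0 x0' + W1 μ μ')) (N : ℕ) :
    IsProbabilityMeasure ((Measure.pi fun _ : Fin N => (μ0 : Measure X)).bind fun x =>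
      ((π0 x00 (emp N x) : Measure U0)).map fun u0 => (x00, u0, x)) ∧
    ∀ (L : ℝ), 0 ≤ L → ∀ f : X0 × U0 × ProbabilityMeasure X → ℝ, Lip3 L f →
    ∫ s, f (s.1, s.2.1, emp N s.2.2) ∂((Measure.pi fun _ : Fin N => (μ0 : Measure X)).bind fun x =>
      ((π0 x00 (emp N x) : Measure U0)).map fun u0 => (x00, u0, x))
     = ∫ x, avg0 π0 f x00 (emp N x) ∂(Measure.pi fun _ : Fin N => (μ0 : Measure X)) := by
  have hA : ∀ x : Fin N → X, IsProbabilityMeasure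
    (((π0 x00 (emp N x) : Measure U0)).map fun u0 => (x00, u0, x)) :=
    fun x => act_kernel_prob π0 hπ0 N (x00, x)
  have h1 : Measurable fun x : Fin N → X => (x00, x) := measurable_const.prodMk measurable_id
  have h2 := act_kernel_meas hLPi π0 hπ0 N
  have hAm : Measurable fun x : Fin N → X =>
    ((π0 x00 (emp N x) : Measure U0)).map fun u0 => (x00, u0, x) := h2.comp h1
  refine ⟨aux_bind_prob _ _ hAm, fun L hL f hf => ?_⟩
  obtain ⟨C, hC⟩ := hf.bdd hL
  have hm : Measurable fun s : X0 × U0 × (Fin N → X) => f (s.1, s.2.1, emp N s.2.2) :=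
    (hf.meas hL).comp (measurable_fst.prodMk (measurable_snd.fst.prodMk
      ((emp_meas N).comp measurable_snd.snd)))
  rw [aux_integral_bind _ _ hAm _ hm C (fun s => hC _)]
  refine integral_congr_ae (ae_of_all _ fun y => ?_)
  simp only
  rw [integral_map (Measurable.aemeasurable (by fun_prop)) hm.aestronglyMeasurable]
  rfl

include hLp hLp0 hLPi hp hp0 hPi hPi0 in
lemma lawN_prob {q} (hq : q ∈ Pi) {q0} (hq0 : q0 ∈ Pi0) (N t : ℕ) :
    IsProbabilityMeasure (m3LawN p p0 q q0 μ0 x00 N t) := by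
  induction t with
  | zero => exact (lawN_zero hLPi μ0 x00 (q0 0) (hPi0 q0 hq0 0) N).1
  | succ t ih =>
    exact (lawN_step hLp hLp0 hLPi p hp p0 hp0 (q t) (hPi q hq t) (q0 (t+1))
      (hPi0 q0 hq0 (t+1)) N _).1

include hLp hLp0 hLPi hp hp0 hPi hPi0 in
lemma lawN_int {q} (hq : q ∈ Pi) {q0} (hq0 : q0 ∈ Pi0) (N t : ℕ) {L : ℝ} (hL : 0 ≤ L)
    {f : X0 × U0 × ProbabilityMeasure X → ℝ} (hf : Lip3 L f) :
    ∫ s, f (s.1, s.2.1, emp N s.2.2) ∂(m3LawN p p0 q q0 μ0 x00 N (t + 1))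
      = ∫ s, ∫ y, avg0 (q0 (t+1)) f y.1 (emp N y.2)
        ∂((p0 s.1 s.2.1 (emp N s.2.2) : Measure X0).prod
        (Measure.pi fun i => agentK p (q t) (s.2.2 i) s.1 s.2.1 (emp N s.2.2)))
        ∂(m3LawN p p0 q q0 μ0 x00 N t) := by
  have := lawN_prob hLp hLp0 hLPi p hp p0 hp0 Pi hPi Pi0 hPi0 μ0 x00 hq hq0 N t
  exact (lawN_step hLp hLp0 hLPi p hp p0 hp0 (q t) (hPi q hq t) (q0 (t+1))
      (hPi0 q0 hq0 (t+1)) N _).2 L hL f hf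

include hLPi hPi0 in
lemma base_bound {q0} (hq0 : q0 ∈ Pi0) {N : ℕ} (hN : N ≠ 0) {e : ℝ}
    (hcb : chaosBound X N e) {L : ℝ} (hL : 0 ≤ L)
    {f : X0 × U0 × ProbabilityMeasure X → ℝ} (hf : Lip3 L f)
    (q : ℕ → X → X0 → ProbabilityMeasure X → ProbabilityMeasure U) :
    |(∫ s, f (s.1, s.2.1, emp N s.2.2) ∂(m3LawN p p0 q q0 μ0 x00 N 0))
        - ∫ s, f s ∂(m3LimLaw p0 q0 (Tcl q) μ0 x00 0)| ≤ L * (1 + LPi) * e := by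
  have h1 : ∫ s, f s ∂(m3LimLaw p0 q0 (Tcl q) μ0 x00 0) = avg0 (q0 0) f x00 μ0 :=
    lim_map_int _ _ _ (hf.meas hL)
  have h2 : ∫ s, f (s.1, s.2.1, emp N s.2.2) ∂(m3LawN p p0 q q0 μ0 x00 N 0)
      = ∫ x, avg0 (q0 0) f x00 (emp N x) ∂(Measure.pi fun _ : Fin N => (μ0 : Measure X)) :=
    (lawN_zero hLPi μ0 x00 (q0 0) (hPi0 q0 hq0 0) N).2 L hL f hf
  have hG := avg0_lip (q0 0) (hPi0 q0 hq0 0) hL hf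
  have hL' : 0 ≤ L * (1 + LPi) := by positivity
  have hch : ∫ y, W1 (emp N y) μ0 ∂(Measure.pi fun _ : Fin N => (μ0 : Measure X)) ≤ e := by
    refine hcb (fun _ => (μ0 : Measure X)) (fun _ => inferInstance) μ0 fun φ hφ => ?_
    have : (N : ℝ) ≠ 0 := by exact_mod_cast hN
    simp
    field_simp
  have hm3 : Measurable fun y : Fin N → X => W1 (emp N y) μ0 := (aux_meas_W1 μ0).comp (emp_meas N)
  obtain ⟨C, hC⟩ := hG.bdd hL'
  have hm1 : Measurable fun y : (Fin N → X) => avg0 (q0 0) f x00 (emp N y) :=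
    (hG.meas hL').comp (measurable_const.prodMk (emp_meas N))
  have hi1 : Integrable (fun y : (Fin N → X) => avg0 (q0 0) f x00 (emp N y))
      (Measure.pi fun _ : Fin N => (μ0 : Measure X)) :=
    Integrable.of_bound hm1.aestronglyMeasurable C (ae_of_all _ fun y => hC _ _)
  have hi3 : Integrable (fun y : (Fin N → X) => L * (1 + LPi) * W1 (emp N y) μ0)
      (Measure.pi fun _ : Fin N => (μ0 : Measure X)) := by
    refine Integrable.const_mul ?_ _
    refine Integrable.of_bound hm3.aestronglyMeasurable (2 * dm X)
      (ae_of_all _ fun y => ?_)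
    rw [Real.norm_eq_abs, abs_of_nonneg (W1_nonneg _ _)]
    exact W1_le_dm _ _
  have h3 : avg0 (q0 0) f x00 μ0 = ∫ _x, avg0 (q0 0) f x00 μ0
      ∂(Measure.pi fun _ : Fin N => (μ0 : Measure X)) := by simp
  rw [h1, h2, h3, ← integral_sub hi1 (integrable_const _)]
  calc _ ≤ ∫ y, |avg0 (q0 0) f x00 (emp N y) - avg0 (q0 0) f x00 μ0|
          ∂(Measure.pi fun _ : Fin N => (μ0 : Measure X)) := abs_integral_le_integral_abs
    _ ≤ ∫ y, L * (1 + LPi) * W1 (emp N y) μ0 ∂(Measure.pi fun _ : Fin N => (μ0 : Measure X)) := by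
        refine integral_mono_of_nonneg (ae_of_all _ fun y => abs_nonneg _) hi3
          (ae_of_all _ fun y => ?_)
        simpa using hG x00 x00 (emp N y) μ0
    _ = L * (1 + LPi) * ∫ y, W1 (emp N y) μ0 ∂(Measure.pi fun _ : Fin N => (μ0 : Measure X)) :=
        integral_const_mul _ _
    _ ≤ _ := mul_le_mul_of_nonneg_left hch hL'

include hLp hLp0 hLPi hp hp0 hPi hPi0 hTcl in
lemma main_bound (t : ℕ) : ∀ L : ℝ, 0 ≤ L → ∃ C : ℝ, 0 ≤ C ∧ ∀ N : ℕ, N ≠ 0 → ∀ e : ℝ,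
    chaosBound X N e → ∀ q ∈ Pi, ∀ q0 ∈ Pi0, ∀ f : X0 × U0 × ProbabilityMeasure X → ℝ,
    Lip3 L f →
    |(∫ s, f (s.1, s.2.1, emp N s.2.2) ∂(m3LawN p p0 q q0 μ0 x00 N t))
        - ∫ s, f s ∂(m3LimLaw p0 q0 (Tcl q) μ0 x00 t)| ≤ C * e := by
  induction t with
  | zero =>
    intro L hL
    exact ⟨L * (1 + LPi), by positivity, fun N hN e he q _ q0 hq0 f hf =>
      base_bound hLPi p p0 Pi0 hPi0 μ0 x00 Tcl hq0 hN he hL hf q⟩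
  | succ t ih =>
    intro L hL
    have hL' : 0 ≤ L * (1 + LPi) := by positivity
    have hL'' : 0 ≤ L * (1 + LPi) * (2 * (Lp * (1 + LPi)) + Lp0) := by positivity
    obtain ⟨C, hC0, hC⟩ := ih _ hL''
    refine ⟨L * (1 + LPi) + C, by positivity, fun N hN e he q hq q0 hq0 f hf => ?_⟩
    have hG := avg0_lip (q0 (t+1)) (hPi0 q0 hq0 (t+1)) hL hf
    have hB := backOp_lip hLp hLPi p hp p0 hp0 (q t) (hPi q hq t) (Tcl q t) (hTcl q hq t) hL' hG
    have h1 := hC N hN e he q hq q0 hq0 _ hB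
    rw [lim_int hLp hLp0 hLPi p hp p0 hp0 Pi hPi Pi0 hPi0 μ0 x00 Tcl hTcl hq hq0 t hL hf,
      lawN_int hLp hLp0 hLPi p hp p0 hp0 Pi hPi Pi0 hPi0 μ0 x00 hq hq0 N t hL hf]
    have hpr := lawN_prob hLp hLp0 hLPi p hp p0 hp0 Pi hPi Pi0 hPi0 μ0 x00 hq hq0 N t
    obtain ⟨C1, hC1⟩ := hG.bdd hL'
    obtain ⟨C2, hC2⟩ := hB.bdd hL''
    have hm1 : Measurable fun y : X0 × (Fin N → X) => avg0 (q0 (t+1)) f y.1 (emp N y.2) :=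
      (hG.meas hL').comp (measurable_fst.prodMk ((emp_meas N).comp measurable_snd))
    have hKp := trans_prob hLp p hp p0 (q t) N
    have hm2 : Measurable fun s : X0 × U0 × (Fin N → X) =>
        ∫ y, avg0 (q0 (t+1)) f y.1 (emp N y.2)
        ∂((p0 s.1 s.2.1 (emp N s.2.2) : Measure X0).prod
        (Measure.pi fun i => agentK p (q t) (s.2.2 i) s.1 s.2.1 (emp N s.2.2))) := by
      let k : Kernel (X0 × U0 × (Fin N → X)) (X0 × (Fin N → X)) := ⟨_,
        trans_meas hLp hLp0 hLPi p hp p0 hp0 (q t) (hPi q hq t) N⟩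
      have : IsMarkovKernel k := ⟨fun x => hKp x⟩
      exact (hm1.stronglyMeasurable.integral_kernel (κ := k)).measurable
    have hm3 : Measurable fun s : X0 × U0 × (Fin N → X) =>
        backOp p0 (Tcl q t) (avg0 (q0 (t+1)) f) (s.1, s.2.1, emp N s.2.2) :=
      (hB.meas hL'').comp (measurable_fst.prodMk (measurable_snd.fst.prodMk
        ((emp_meas N).comp measurable_snd.snd)))
    have h2 := aux_int_sub (m3LawN p p0 q q0 μ0 x00 N t)
      (Integrable.of_bound hm2.aestronglyMeasurable C1 (ae_of_all _ fun s => by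
        have := hKp s
        have h1 := norm_integral_le_of_norm_le_const
          (μ := (p0 s.1 s.2.1 (emp N s.2.2) : Measure X0).prod
            (Measure.pi fun i => agentK p (q t) (s.2.2 i) s.1 s.2.1 (emp N s.2.2)))
          (f := fun y : X0 × (Fin N → X) => avg0 (q0 (t+1)) f y.1 (emp N y.2)) (C := C1)
          (ae_of_all _ fun y => hC1 _ _)
        rwa [probReal_univ, mul_one] at h1))
      (Integrable.of_bound hm3.aestronglyMeasurable C2 (ae_of_all _ fun s => hC2 _))
      (step_bound hLp hLPi p hp p0 (q t) (hPi q hq t) (Tcl q t) (hTcl q hq t) hN he hL' hG)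
    have h3 := (abs_sub_le _ _ _).trans (add_le_add h2 h1)
    rwa [add_mul]
end final
end step
end helpers

/-- propagation of chaos for M3FC, with rate `O(1/√N)` for finite `𝒳`. For any
equi-Lipschitz family `ℱ` on `𝒳⁰ × 𝒰⁰ × 𝒫(𝒳)` and every time `t`,
`sup_{f,π,π⁰} |E[f(x⁰_t,u⁰_t,μ^N_t)] − E[f(x⁰_t,u⁰_t,μ_t)]| → 0` as `N → ∞`; if `𝒳` is finite
the convergence is at rate `O(1/√N)`. -/
theorem statement14 {X U X0 U0 : Type*}
    [MetricSpace X] [CompactSpace X] [MeasurableSpace X] [BorelSpace X] [Nonempty X]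
    [MetricSpace U] [CompactSpace U] [MeasurableSpace U] [BorelSpace U]
    [MetricSpace X0] [CompactSpace X0] [MeasurableSpace X0] [BorelSpace X0]
    [MetricSpace U0] [CompactSpace U0] [MeasurableSpace U0] [BorelSpace U0]
    (Lp Lp0 Lr LPi LF : ℝ)
    (p : X → U → X0 → U0 → ProbabilityMeasure X → ProbabilityMeasure X)
    (hp : ∀ (x x' : X) (u u' : U) (x0 x0' : X0) (u0 u0' : U0)
        (μ μ' : ProbabilityMeasure X) (f : X → ℝ), LipschitzWith 1 f →
      |∫ y, f y ∂(p x u x0 u0 μ : Measure X) - ∫ y, f y ∂(p x' u' x0' u0' μ' : Measure X)|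
        ≤ Lp * (dist x x' + dist u u' + dist x0 x0' + dist u0 u0' + W1 μ μ'))
    (p0 : X0 → U0 → ProbabilityMeasure X → ProbabilityMeasure X0)
    (hp0 : ∀ (x0 x0' : X0) (u0 u0' : U0) (μ μ' : ProbabilityMeasure X) (f : X0 → ℝ),
        LipschitzWith 1 f →
      |∫ y, f y ∂(p0 x0 u0 μ : Measure X0) - ∫ y, f y ∂(p0 x0' u0' μ' : Measure X0)|
        ≤ Lp0 * (dist x0 x0' + dist u0 u0' + W1 μ μ'))
    (r : X0 → U0 → ProbabilityMeasure X → ℝ)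
    (hr : ∀ (x0 x0' : X0) (u0 u0' : U0) (μ μ' : ProbabilityMeasure X),
      |r x0 u0 μ - r x0' u0' μ'| ≤ Lr * (dist x0 x0' + dist u0 u0' + W1 μ μ'))
    (Pi : Set (ℕ → X → X0 → ProbabilityMeasure X → ProbabilityMeasure U))
    (hPi : ∀ π ∈ Pi, ∀ (t : ℕ) (x x' : X) (x0 x0' : X0) (μ μ' : ProbabilityMeasure X)
        (g : U → ℝ), LipschitzWith 1 g →
      |∫ u, g u ∂(π t x x0 μ : Measure U) - ∫ u, g u ∂(π t x' x0' μ' : Measure U)|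
        ≤ LPi * (dist x x' + dist x0 x0' + W1 μ μ'))
    (Pi0 : Set (ℕ → X0 → ProbabilityMeasure X → ProbabilityMeasure U0))
    (hPi0 : ∀ π0 ∈ Pi0, ∀ (t : ℕ) (x0 x0' : X0) (μ μ' : ProbabilityMeasure X) (g : U0 → ℝ),
        LipschitzWith 1 g →
      |∫ u, g u ∂(π0 t x0 μ : Measure U0) - ∫ u, g u ∂(π0 t x0' μ' : Measure U0)|
        ≤ LPi * (dist x0 x0' + W1 μ μ'))
    (F : Set (X0 × U0 × ProbabilityMeasure X → ℝ))
    (hF : ∀ f ∈ F, ∀ a b : X0 × U0 × ProbabilityMeasure X,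
      |f a - f b| ≤ LF * (dist a.1 b.1 + dist a.2.1 b.2.1 + W1 a.2.2 b.2.2))
    (μ0 : ProbabilityMeasure X) (x00 : X0)
    (Tcl : (ℕ → X → X0 → ProbabilityMeasure X → ProbabilityMeasure U) →
      ℕ → X0 → U0 → ProbabilityMeasure X → ProbabilityMeasure X)
    (hTcl : ∀ q ∈ Pi, ∀ (t : ℕ) (x0 : X0) (u0 : U0) (μ : ProbabilityMeasure X),
      (Tcl q t x0 u0 μ : Measure X) = (μ : Measure X).bind fun x =>
        ((q t x x0 μ : Measure U)).bind fun u => (p x u x0 u0 μ : Measure X)) :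
    (∀ t : ℕ, ∀ ε > (0 : ℝ), ∃ N0 : ℕ, ∀ N ≥ N0, ∀ q ∈ Pi, ∀ q0 ∈ Pi0, ∀ f ∈ F,
      |(∫ s, f (s.1, s.2.1, emp N s.2.2) ∂(m3LawN p p0 q q0 μ0 x00 N t))
        - ∫ s, f s ∂(m3LimLaw p0 q0 (Tcl q) μ0 x00 t)| ≤ ε) ∧
    (Finite X → ∀ t : ℕ, ∃ C : ℝ, ∀ N : ℕ, 1 ≤ N → ∀ q ∈ Pi, ∀ q0 ∈ Pi0, ∀ f ∈ F,
      |(∫ s, f (s.1, s.2.1, emp N s.2.2) ∂(m3LawN p p0 q q0 μ0 x00 N t))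
        - ∫ s, f s ∂(m3LimLaw p0 q0 (Tcl q) μ0 x00 t)| ≤ C / Real.sqrt N) := by
  have hp' : ∀ (x x' : X) (u u' : U) (x0 x0' : X0) (u0 u0' : U0)
        (μ μ' : ProbabilityMeasure X) (f : X → ℝ), LipschitzWith 1 f →
      |∫ y, f y ∂(p x u x0 u0 μ : Measure X) - ∫ y, f y ∂(p x' u' x0' u0' μ' : Measure X)|
        ≤ |Lp| * (dist x x' + dist u u' + dist x0 x0' + dist u0 u0' + W1 μ μ') := by
    intro x x' u u' x0 x0' u0 u0' μ μ' f hf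
    have hw := W1_nonneg μ μ'
    exact (hp x x' u u' x0 x0' u0 u0' μ μ' f hf).trans
      (mul_le_mul_of_nonneg_right (le_abs_self _) (by positivity))
  have hp0' : ∀ (x0 x0' : X0) (u0 u0' : U0) (μ μ' : ProbabilityMeasure X) (f : X0 → ℝ),
        LipschitzWith 1 f →
      |∫ y, f y ∂(p0 x0 u0 μ : Measure X0) - ∫ y, f y ∂(p0 x0' u0' μ' : Measure X0)|
        ≤ |Lp0| * (dist x0 x0' + dist u0 u0' + W1 μ μ') := by
    intro x0 x0' u0 u0' μ μ' f hf
    have hw := W1_nonneg μ μ'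
    exact (hp0 x0 x0' u0 u0' μ μ' f hf).trans
      (mul_le_mul_of_nonneg_right (le_abs_self _) (by positivity))
  have hPi' : ∀ π ∈ Pi, ∀ (t : ℕ) (x x' : X) (x0 x0' : X0) (μ μ' : ProbabilityMeasure X)
        (g : U → ℝ), LipschitzWith 1 g →
      |∫ u, g u ∂(π t x x0 μ : Measure U) - ∫ u, g u ∂(π t x' x0' μ' : Measure U)|
        ≤ |LPi| * (dist x x' + dist x0 x0' + W1 μ μ') := by
    intro π hπ t x x' x0 x0' μ μ' f hf
    have hw := W1_nonneg μ μ'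
    exact (hPi π hπ t x x' x0 x0' μ μ' f hf).trans
      (mul_le_mul_of_nonneg_right (le_abs_self _) (by positivity))
  have hPi0' : ∀ π0 ∈ Pi0, ∀ (t : ℕ) (x0 x0' : X0) (μ μ' : ProbabilityMeasure X) (g : U0 → ℝ),
        LipschitzWith 1 g →
      |∫ u, g u ∂(π0 t x0 μ : Measure U0) - ∫ u, g u ∂(π0 t x0' μ' : Measure U0)|
        ≤ |LPi| * (dist x0 x0' + W1 μ μ') := by
    intro π hπ t x0 x0' μ μ' f hf
    have hw := W1_nonneg μ μ'
    exact (hPi0 π hπ t x0 x0' μ μ' f hf).trans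
      (mul_le_mul_of_nonneg_right (le_abs_self _) (by positivity))
  have hF' : ∀ f ∈ F, Lip3 |LF| f := by
    intro f hf a b
    have hw := W1_nonneg a.2.2 b.2.2
    exact (hF f hf a b).trans
      (mul_le_mul_of_nonneg_right (le_abs_self _) (by positivity))
  have main := fun t => main_bound (abs_nonneg Lp) (abs_nonneg Lp0) (abs_nonneg LPi) p hp' p0 hp0'
    Pi hPi' Pi0 hPi0' μ0 x00 Tcl hTcl t |LF| (abs_nonneg LF)
  refine ⟨fun t ε hε => ?_, fun hfin t => ?_⟩
  · obtain ⟨C, hC0, hC⟩ := main t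
    obtain ⟨N0, hN0, hN⟩ := chaos_general (X := X) (ε / (C + 1)) (by positivity)
    refine ⟨N0, fun N hNN q hq q0 hq0 f hf => ?_⟩
    refine (hC N (by omega) _ (hN N hNN) q hq q0 hq0 f (hF' f hf)).trans ?_
    rw [mul_div_assoc', div_le_iff₀ (by positivity)]
    nlinarith
  · obtain ⟨C, hC0, hC⟩ := main t
    obtain ⟨C', hC', hN⟩ := chaos_finite (X := X)
    refine ⟨C * C', fun N hNN q hq q0 hq0 f hf => ?_⟩
    refine (hC N (by omega) _ (hN N hNN) q hq q0 hq0 f (hF' f hf)).trans ?_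
    rw [mul_div_assoc]
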